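/- arXiv:1812.05580 — 5 statements merged into one kernel-verified Lean document; each statement's English description precedes it below -/
import Mathlib

section
/- For every natural number n, the number of partitions of n for which there exists j ≥ 0 such that each of the odd numbers 1, 3, 5, ..., 2j−1 appears exactly twice, every part greater than 2j appears at most once, and every repeated odd part is among 1, 3, ..., 2j−1, equals the number of partitions of n into parts none of which is congruent to 0, 3, or −3 modulo 7. -/
open Finset

section RS
variable {R : Type*} [CommRing R]

/-- `(-1)^k q^(k(3k-1)/2)` -/
def rsE (q : R) (k : ℕ) : R := ∏ i ∈ range k, (-(q ^ (3 * i + 1)))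

/-- the Bailey pair coefficients -/
def rsAl (q : R) (k : ℕ) : R := if k = 0 then 1 else rsE q k * (1 + q ^ k)

/-- `(-1)^k p^(k(k-1)/2)` -/
def rsF (p : R) (k : ℕ) : R := ∏ i ∈ range k, (-(p ^ i))

/-- the Jacobi triple product coefficients -/
def rsC (a b : R) (k : ℕ) : R := if k = 0 then 1 else rsF (a * b) k * (a ^ k + b ^ k)

lemma rs_tele1 (q : R) (u : ℕ → R) (hu : ∀ k, u k = (1 - q ^ (2 * (k + 1))) * u (k + 1)) (n k : ℕ)
    (hk : k ≤ n) :
    (1 + q ^ (2 * n + 1)) * (1 - q ^ (4 * n + 4)) *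
        ∑ r ∈ range (k + 1), rsAl q r * u (n + 1 - r) * u (n + 1 + r)
      - ∑ r ∈ range (k + 1), rsAl q r * u (n - r) * u (n + r)
      = rsE q k * q ^ k * (q ^ (2 * n + 2) * (q ^ (2 * k) + q ^ k) + q ^ (2 * n + 1)
          + q ^ (4 * n + 3) * q ^ k) * u (n - k) * u (n + 1 + k) := by
  induction k with
  | zero =>
    simp [rsAl, rsE]
    rw [hu n]
    ring
  | succ k ih =>
    specialize ih (by omega)
    obtain ⟨d, rfl⟩ := Nat.exists_eq_add_of_le hk
    rw [sum_range_succ _ (k + 1), sum_range_succ _ (k + 1)]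
    rw [show k + 1 + d - k = d + 1 by omega] at ih
    rw [show k + 1 + d + 1 - (k + 1) = d + 1 by omega, show k + 1 + d - (k + 1) = d by omega,
      show k + 1 + d + 1 + (k + 1) = 2 * k + d + 3 by ring,
      show k + 1 + d + (k + 1) = 2 * k + d + 2 by ring]
    rw [show k + 1 + d + 1 + k = 2 * k + d + 2 by ring] at ih
    have h1 := hu d
    have h2 := hu (2 * k + d + 2)
    have h3 : rsE q (k + 1) = rsE q k * (-(q ^ (3 * k + 1))) := by simp [rsE, prod_range_succ]
    have h4 : rsAl q (k + 1) = rsE q k * (-(q ^ (3 * k + 1))) * (1 + q ^ (k + 1)) := by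
      simp [rsAl, h3]
    rw [h4, h3]
    rw [h1, h2]
    rw [h2] at ih
    linear_combination ih

lemma rs_bailey (q : R) (u : ℕ → R) (h0 : u 0 = 1)
    (hu : ∀ k, u k = (1 - q ^ (2 * (k + 1))) * u (k + 1))
    (hq : ∀ k, IsUnit (1 - q ^ (k + 1))) (n : ℕ) :
    ∑ r ∈ range (n + 1), rsAl q r * u (n - r) * u (n + r) =
      (∏ i ∈ range n, (1 - q ^ (2 * i + 1))) * u (2 * n) := by
  induction n with
  | zero => simp [rsAl, h0]
  | succ n ih =>
    have ht := rs_tele1 q u hu n n le_rfl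
    rw [ih] at ht
    have hun : IsUnit ((1 + q ^ (2 * n + 1)) * (1 - q ^ (4 * n + 4))) := by
      refine IsUnit.mul ?_ (hq (4 * n + 3))
      have := hq (4 * n + 1)
      rw [show 1 - q ^ (4 * n + 1 + 1) = (1 + q ^ (2 * n + 1)) * (1 - q ^ (2 * n + 1)) by ring]
        at this
      exact isUnit_of_mul_isUnit_left this
    apply hun.mul_left_cancel
    rw [sum_range_succ, prod_range_succ]
    have h3 : rsE q (n + 1) = rsE q n * (-(q ^ (3 * n + 1))) := by simp [rsE, prod_range_succ]
    have h4 : rsAl q (n + 1) = rsE q n * (-(q ^ (3 * n + 1))) * (1 + q ^ (n + 1)) := by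
      simp [rsAl, h3]
    rw [h4]
    simp only [Nat.sub_self, h0] at ht ⊢
    have h1 := hu (2 * n)
    have h2 := hu (2 * n + 1)
    rw [show n + 1 + n = 2 * n + 1 by ring, h1, h2] at ht
    rw [show n + 1 + (n + 1) = 2 * n + 1 + 1 by ring, show 2 * (n + 1) = 2 * n + 1 + 1 by ring]
    linear_combination ht

lemma rs_tele2 (a b : R) (u : ℕ → R) (hu : ∀ k, u k = (1 - (a * b) ^ (k + 1)) * u (k + 1)) (n k : ℕ)
    (hk : k ≤ n) :
    (1 - (a * b) ^ (2 * n + 1)) * (1 - (a * b) ^ (2 * n + 2)) *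
        ∑ r ∈ range (k + 1), rsC a b r * u (n + 1 - r) * u (n + 1 + r)
      - (1 - a * (a * b) ^ n) * (1 - b * (a * b) ^ n) *
        ∑ r ∈ range (k + 1), rsC a b r * u (n - r) * u (n + r)
      = rsF (a * b) k * (a ^ k * ((a * b) ^ n * ((a * b) ^ (k + 1) + a)
            - (a * b) ^ (2 * n + 1) * (a * (a * b) ^ k + 1))
          + b ^ k * ((a * b) ^ n * ((a * b) ^ (k + 1) + b)
            - (a * b) ^ (2 * n + 1) * (b * (a * b) ^ k + 1))) * u (n - k) * u (n + 1 + k) := by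
  induction k with
  | zero =>
    simp [rsC, rsF]
    rw [hu n]
    ring
  | succ k ih =>
    specialize ih (by omega)
    obtain ⟨d, rfl⟩ := Nat.exists_eq_add_of_le hk
    rw [sum_range_succ _ (k + 1), sum_range_succ _ (k + 1)]
    rw [show k + 1 + d - k = d + 1 by omega] at ih
    rw [show k + 1 + d + 1 - (k + 1) = d + 1 by omega, show k + 1 + d - (k + 1) = d by omega,
      show k + 1 + d + 1 + (k + 1) = 2 * k + d + 3 by ring,
      show k + 1 + d + (k + 1) = 2 * k + d + 2 by ring]
    rw [show k + 1 + d + 1 + k = 2 * k + d + 2 by ring] at ih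
    have h1 := hu d
    have h2 := hu (2 * k + d + 2)
    have h3 : rsF (a * b) (k + 1) = rsF (a * b) k * (-((a * b) ^ k)) := by
      simp [rsF, prod_range_succ]
    have h4 : rsC a b (k + 1) = rsF (a * b) k * (-((a * b) ^ k)) * (a ^ (k + 1) + b ^ (k + 1)) := by
      simp [rsC, h3]
    rw [h4, h3]
    rw [h1, h2]
    rw [h2] at ih
    linear_combination ih

lemma rs_jtp (a b : R) (u : ℕ → R) (h0 : u 0 = 1)
    (hu : ∀ k, u k = (1 - (a * b) ^ (k + 1)) * u (k + 1))
    (hq : ∀ k, IsUnit (1 - (a * b) ^ (k + 1))) (n : ℕ) :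
    ∑ r ∈ range (n + 1), rsC a b r * u (n - r) * u (n + r) =
      (∏ i ∈ range n, ((1 - a * (a * b) ^ i) * (1 - b * (a * b) ^ i))) * u (2 * n) := by
  induction n with
  | zero => simp [rsC, h0]
  | succ n ih =>
    have ht := rs_tele2 a b u hu n n le_rfl
    rw [ih] at ht
    have hun : IsUnit ((1 - (a * b) ^ (2 * n + 1)) * (1 - (a * b) ^ (2 * n + 2))) :=
      IsUnit.mul (hq _) (hq (2 * n + 1))
    apply hun.mul_left_cancel
    rw [sum_range_succ, prod_range_succ]
    have h3 : rsF (a * b) (n + 1) = rsF (a * b) n * (-((a * b) ^ n)) := by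
      simp [rsF, prod_range_succ]
    have h4 : rsC a b (n + 1) = rsF (a * b) n * (-((a * b) ^ n)) * (a ^ (n + 1) + b ^ (n + 1)) := by
      simp [rsC, h3]
    rw [h4]
    simp only [Nat.sub_self, h0] at ht ⊢
    have h1 := hu (2 * n)
    have h2 := hu (2 * n + 1)
    rw [show n + 1 + n = 2 * n + 1 by ring, h1, h2] at ht
    rw [show n + 1 + (n + 1) = 2 * n + 1 + 1 by ring, show 2 * (n + 1) = 2 * n + 1 + 1 by ring]
    linear_combination ht

/-- Durfee rectangle identity with `q` nilpotent. -/
lemma rs_durfee (q : R) (u : ℕ → R) (h0 : u 0 = 1) (n : ℕ) (hn : ∀ k, n < k → q ^ k = 0)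
    (hu : ∀ k, u k = (1 - q ^ (k + 1)) * u (k + 1)) (k : ℕ) :
    ∑ m ∈ range (n + 1), q ^ (m * (m + k)) * u m * u (m + k) = u n := by
  have hstab : ∀ d, u (n + d) = u n := by
    intro d
    induction d with
    | zero => rfl
    | succ d ih => rw [← ih, hu (n + d), hn _ (by omega)]; simp [add_assoc]
  set D : ℕ → R := fun k => ∑ m ∈ range (n + 1), q ^ (m * (m + k)) * u m * u (m + k) with hD
  have hrec : ∀ k, D k - D (k + 1) = -q ^ (k + 1) * (D (k + 1) - D (k + 2)) := by
    intro k
    have e1 : D k - D (k + 1) =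
        ∑ m ∈ range (n + 1), q ^ (m * (m + k)) * (1 - q ^ m) * u m * u (m + k + 1)
        - ∑ m ∈ range (n + 1), q ^ (m * (m + k) + m + k + 1) * u m * u (m + k + 1) := by
      simp only [hD]
      rw [← sum_sub_distrib, ← sum_sub_distrib]
      refine sum_congr rfl fun m _ => ?_
      rw [hu (m + k)]
      ring
    have e2 : ∑ m ∈ range (n + 1), q ^ (m * (m + k)) * (1 - q ^ m) * u m * u (m + k + 1)
        = ∑ m ∈ range (n + 1), q ^ ((m + 1) * (m + 1 + k)) * u m * u (m + k + 2) := by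
      rw [sum_range_succ', sum_range_succ, hn ((n + 1) * (n + 1 + k)) (by nlinarith)]
      simp only [pow_zero, sub_self, mul_zero, zero_mul]
      congr 1
      refine sum_congr rfl fun m _ => ?_
      rw [hu m, show m + 1 + k + 1 = m + k + 2 by ring]
      ring
    rw [e1, e2]
    simp only [hD]
    rw [← sum_sub_distrib, ← sum_sub_distrib, mul_sum]
    refine sum_congr rfl fun m _ => ?_
    rw [show m + (k + 1) = m + k + 1 by ring, show m + (k + 2) = m + k + 2 by ring,
      hu (m + k + 1)]
    ring
  have hz : ∀ d k, n ≤ k + d → D k - D (k + 1) = 0 := by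
    intro d
    induction d with
    | zero => intro k hk; rw [hrec, hn _ (by omega)]; simp
    | succ d ih => intro k hk; rw [hrec, ih (k + 1) (by omega)]; simp
  have hc : ∀ d, D k = D (k + d) := by
    intro d
    induction d with
    | zero => rfl
    | succ d ih => rw [ih]; exact sub_eq_zero.mp (hz n _ (by omega))
  change D k = u n
  rw [hc (n + 1)]
  simp only [hD]
  rw [sum_range_succ', sum_eq_zero]
  · have h1 : u (k + (n + 1)) = u n := by rw [← hstab (k + 1)]; congr 1; omega
    simp [h1, h0]
  · intro m _
    rw [hn _ (by nlinarith)]; simp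

/-- `(x^s; x^s)_k` -/
def rsP (x : R) (s k : ℕ) : R := ∏ i ∈ range k, (1 - x ^ (s * (i + 1)))

/-- its inverse -/
noncomputable def rsU (x : R) (s k : ℕ) : R := Ring.inverse (rsP x s k)

lemma rs_unit {x : R} {n : ℕ} (hn : ∀ k, n < k → x ^ k = 0) (k : ℕ) :
    IsUnit (1 - x ^ (k + 1)) := by
  apply IsNilpotent.isUnit_one_sub
  refine ⟨n + 1, ?_⟩
  rw [← pow_mul]
  exact hn _ (by nlinarith)

lemma rsP_unit {x : R} {n : ℕ} (hn : ∀ k, n < k → x ^ k = 0) {s : ℕ} (hs : 0 < s) (k : ℕ) :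
    IsUnit (rsP x s k) := by
  induction k with
  | zero => simp [rsP]
  | succ k ih =>
    rw [rsP, prod_range_succ]
    refine IsUnit.mul ih ?_
    obtain ⟨t, ht⟩ : ∃ t, s * (k + 1) = t + 1 := ⟨s * (k + 1) - 1, by
      have : 0 < s * (k + 1) := by positivity
      omega⟩
    rw [ht]
    exact rs_unit hn t

lemma rsU_mul {x : R} {n : ℕ} (hn : ∀ k, n < k → x ^ k = 0) {s : ℕ} (hs : 0 < s) (k : ℕ) :
    rsP x s k * rsU x s k = 1 := Ring.mul_inverse_cancel _ (rsP_unit hn hs k)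

lemma rsU_zero (x : R) (s : ℕ) : rsU x s 0 = 1 := by simp [rsU, rsP]

lemma rsU_succ {x : R} {n : ℕ} (hn : ∀ k, n < k → x ^ k = 0) {s : ℕ} (hs : 0 < s) (k : ℕ) :
    rsU x s k = (1 - x ^ (s * (k + 1))) * rsU x s (k + 1) := by
  apply (rsP_unit hn hs k).mul_left_cancel
  have h1 := rsU_mul hn hs k
  have h2 := rsU_mul hn hs (k + 1)
  have h3 : rsP x s (k + 1) = rsP x s k * (1 - x ^ (s * (k + 1))) := by
    rw [rsP, prod_range_succ, rsP]
  rw [h3] at h2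
  linear_combination h1 - h2

lemma rs_coeff (x : R) (r : ℕ) : rsAl x r * x ^ (2 * r ^ 2) = rsC (x ^ 4) (x ^ 3) r := by
  have h : ∀ r, rsE x r * x ^ (2 * r ^ 2) = rsF (x ^ 4 * x ^ 3) r * x ^ (3 * r) := by
    intro r
    induction r with
    | zero => simp [rsE, rsF]
    | succ r ih =>
      rw [rsE, rsF, prod_range_succ, prod_range_succ]
      rw [rsE, rsF] at ih
      linear_combination (-(x ^ (7 * r + 3))) * ih
  by_cases hr : r = 0
  · subst hr; simp [rsAl, rsC]
  · simp only [rsAl, rsC, hr, if_false]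
    linear_combination (1 + x ^ r) * h r

/-- truncation: `x^e / (x^s;x^s)_m = x^e / (x^s;x^s)_{m+d}` -/
lemma rs_trunc {x : R} {n : ℕ} (hn : ∀ k, n < k → x ^ k = 0) {s : ℕ} (hs : 0 < s) (e m d : ℕ)
    (h : n < e + s * (m + 1)) : x ^ e * rsU x s m = x ^ e * rsU x s (m + d) := by
  induction d with
  | zero => rfl
  | succ d ih =>
    rw [ih, rsU_succ hn hs (m + d)]
    have : x ^ e * x ^ (s * (m + d + 1)) = 0 := by
      rw [← pow_add]; exact hn _ (by nlinarith)
    rw [← add_assoc]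
    linear_combination (- rsU x s (m + d + 1)) * this

lemma rs_theta {x : R} {n : ℕ} (hn : ∀ k, n < k → x ^ k = 0) :
    ∑ r ∈ range (n + 1), rsC (x ^ 4) (x ^ 3) r =
      ∏ i ∈ range n, ((1 - x ^ (7 * i + 4)) * (1 - x ^ (7 * i + 3)) * (1 - x ^ (7 * i + 7))) := by
  have hu : ∀ k, rsU x 7 k = (1 - (x ^ 4 * x ^ 3) ^ (k + 1)) * rsU x 7 (k + 1) := by
    intro k
    rw [rsU_succ hn (by norm_num) k]
    ring
  have hq : ∀ k, IsUnit (1 - (x ^ 4 * x ^ 3) ^ (k + 1)) := by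
    intro k
    have := rs_unit hn (7 * k + 6)
    rwa [show x ^ (7 * k + 6 + 1) = (x ^ 4 * x ^ 3) ^ (k + 1) by ring] at this
  have h := rs_jtp (x ^ 4) (x ^ 3) (rsU x 7) (rsU_zero x 7) hu hq n
  have key : ∀ r ∈ range (n + 1), rsC (x ^ 4) (x ^ 3) r * rsU x 7 (n - r) * rsU x 7 (n + r)
      = rsC (x ^ 4) (x ^ 3) r * (rsU x 7 n * rsU x 7 n) := by
    intro r hr
    have hr' : r ≤ n := by simpa [Nat.lt_succ_iff] using hr
    have h1 : rsU x 7 (n + r) = rsU x 7 n := by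
      have := rs_trunc hn (s := 7) (by norm_num) 0 n r (by omega)
      simpa using this.symm
    have h2 := rs_trunc hn (s := 7) (by norm_num) (2 * r ^ 2) (n - r) r (by
      have : r ≤ r ^ 2 := by nlinarith
      omega)
    rw [Nat.sub_add_cancel hr'] at h2
    rw [h1, ← rs_coeff]
    linear_combination rsAl x r * rsU x 7 n * h2
  rw [sum_congr rfl key, ← sum_mul] at h
  have h3 : rsU x 7 (2 * n) = rsU x 7 n := by
    have := rs_trunc hn (s := 7) (by norm_num) 0 n n (by omega)
    rw [two_mul]
    simpa using this.symm
  rw [h3] at h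
  have h4 := rsU_mul hn (s := 7) (by norm_num) n
  have h5 : ∏ i ∈ range n, ((1 - x ^ (7 * i + 4)) * (1 - x ^ (7 * i + 3)) * (1 - x ^ (7 * i + 7)))
      = (∏ i ∈ range n, ((1 - x ^ 4 * (x ^ 4 * x ^ 3) ^ i) * (1 - x ^ 3 * (x ^ 4 * x ^ 3) ^ i)))
        * rsP x 7 n := by
    rw [rsP, ← prod_mul_distrib]
    refine prod_congr rfl fun i _ => ?_
    ring
  rw [h5]
  generalize (∏ i ∈ range n, ((1 - x ^ 4 * (x ^ 4 * x ^ 3) ^ i) *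
    (1 - x ^ 3 * (x ^ 4 * x ^ 3) ^ i))) = Y at *
  generalize ∑ r ∈ range (n + 1), rsC (x ^ 4) (x ^ 3) r = S at *
  generalize rsU x 7 n = U at *
  generalize rsP x 7 n = P at *
  linear_combination P ^ 2 * h - (S * (P * U + 1) - Y * P) * h4

lemma rs_selberg {x : R} {n : ℕ} (hn : ∀ k, n < k → x ^ k = 0) :
    rsP x 2 n * ∑ j ∈ range (n + 1), x ^ (2 * j ^ 2) *
        ((∏ i ∈ range j, (1 - x ^ (2 * i + 1))) * rsU x 2 (2 * j)) =
      ∑ r ∈ range (n + 1), rsC (x ^ 4) (x ^ 3) r := by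
  have hb := rs_bailey x (rsU x 2) (rsU_zero x 2) (rsU_succ hn (by norm_num)) (rs_unit hn)
  have hd := rs_durfee (x ^ 2) (rsU x 2) (rsU_zero x 2) n
    (fun k hk => by rw [← pow_mul]; exact hn _ (by omega))
    (fun k => by rw [rsU_succ hn (by norm_num) k]; ring)
  simp_rw [← hb, mul_sum]
  rw [sum_sigma']
  have : ∀ r ∈ range (n + 1), rsC (x ^ 4) (x ^ 3) r =
      ∑ m ∈ range (n + 1 - r), rsP x 2 n * (x ^ (2 * (m + r) ^ 2) *
        (rsAl x r * rsU x 2 (m + r - r) * rsU x 2 (m + r + r))) := by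
    intro r hr
    have hr' : r ≤ n := by simpa [Nat.lt_succ_iff] using hr
    have h1 := hd (2 * r)
    have h2 := rsU_mul hn (s := 2) (by norm_num) n
    rw [← h1, mul_sum] at h2
    rw [← rs_coeff, ← mul_one (rsAl x r * _), ← h2, mul_sum]
    symm
    rw [← sum_subset (range_mono (show n + 1 - r ≤ n + 1 by omega))]
    · refine sum_congr rfl fun m _ => ?_
      rw [Nat.add_sub_cancel, show m + r + r = m + 2 * r by ring]
      ring
    · intro m hm hm'
      have : n + 1 ≤ m + r := by simp at hm'; omega
      have hz : x ^ (2 * r ^ 2) * (x ^ 2) ^ (m * (m + 2 * r)) = 0 := by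
        rw [← pow_mul, ← pow_add]
        apply hn
        nlinarith
      linear_combination (rsAl x r * rsP x 2 n * rsU x 2 m * rsU x 2 (m + 2 * r)) * hz
  rw [sum_congr rfl this, sum_sigma']
  refine sum_bij' (fun p _ => ⟨p.2, p.1 - p.2⟩) (fun p _ => ⟨p.2 + p.1, p.1⟩) ?_ ?_ ?_ ?_ ?_
  · rintro ⟨j, r⟩ h; simp at h ⊢; omega
  · rintro ⟨j, r⟩ h; simp at h ⊢; omega
  · rintro ⟨j, r⟩ h; simp at h ⊢; omega
  · rintro ⟨j, r⟩ h; simp at h ⊢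
  · rintro ⟨j, r⟩ h
    simp at h
    simp only [Nat.sub_add_cancel (show r ≤ j by omega)]

lemma rs_dist (x : R) (m : ℕ) :
    rsP x 2 m = (∏ i ∈ range m, (1 - x ^ (i + 1))) * ∏ i ∈ range m, (1 + x ^ (i + 1)) := by
  rw [rsP, ← prod_mul_distrib]
  refine prod_congr rfl fun i _ => ?_
  ring

lemma rs_oddeven (x : R) (j : ℕ) :
    ∏ i ∈ range (2 * j), (1 - x ^ (i + 1)) =
      (∏ i ∈ range j, (1 - x ^ (2 * i + 1))) * rsP x 2 j := by
  induction j with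
  | zero => simp [rsP]
  | succ j ih =>
    rw [show 2 * (j + 1) = 2 * j + 1 + 1 by ring, prod_range_succ, prod_range_succ, ih, rsP, rsP,
      prod_range_succ, prod_range_succ]
    ring

lemma rs_main {x : R} {n : ℕ} (hn : ∀ k, n < k → x ^ k = 0) :
    (∏ i ∈ range n, (1 - x ^ (i + 1))) * ∑ j ∈ range (n / 2 + 1), x ^ (2 * j ^ 2) *
        rsU x 2 j * ∏ i ∈ Ico (2 * j) n, (1 + x ^ (i + 1)) =
      ∏ i ∈ range n, ((1 - x ^ (7 * i + 4)) * (1 - x ^ (7 * i + 3)) * (1 - x ^ (7 * i + 7))) := by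
  rw [← rs_theta hn, ← rs_selberg hn, mul_sum, mul_sum]
  rw [← sum_subset (range_mono (show n / 2 + 1 ≤ n + 1 by omega))]
  · refine sum_congr rfl fun j hj => ?_
    have hj' : 2 * j ≤ n := by simp at hj; omega
    have h1 := rs_dist x n
    have h2 := rs_dist x (2 * j)
    have h3 := rs_oddeven x j
    have h4 := rsU_mul hn (s := 2) (by norm_num) j
    have h5 := rsU_mul hn (s := 2) (by norm_num) (2 * j)
    rw [h3] at h2
    rw [← prod_range_mul_prod_Ico (fun i => 1 - x ^ (i + 1)) hj',
      ← prod_range_mul_prod_Ico (fun i => 1 + x ^ (i + 1)) hj'] at h1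
    apply (rsP_unit hn (s := 2) (by norm_num) (2 * j)).mul_left_cancel
    have e1 : rsP x 2 (2 * j) * (rsP x 2 n * (x ^ (2 * j ^ 2) *
      ((∏ i ∈ range j, (1 - x ^ (2 * i + 1))) * rsU x 2 (2 * j)))) =
      rsP x 2 n * (x ^ (2 * j ^ 2) * ((∏ i ∈ range j, (1 - x ^ (2 * i + 1))))) := by
      linear_combination (rsP x 2 n * (x ^ (2 * j ^ 2) *
        ((∏ i ∈ range j, (1 - x ^ (2 * i + 1)))))) * h5
    rw [e1, h2, h1, ← prod_range_mul_prod_Ico (fun i => 1 - x ^ (i + 1)) hj']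
    generalize ∏ i ∈ range j, (1 - x ^ (2 * i + 1)) = O at *
    generalize ∏ i ∈ range (2 * j), (1 - x ^ (i + 1)) = A at *
    generalize ∏ i ∈ Ico (2 * j) n, (1 - x ^ (i + 1)) = B at *
    generalize ∏ i ∈ range (2 * j), (1 + x ^ (i + 1)) = C at *
    generalize ∏ i ∈ Ico (2 * j) n, (1 + x ^ (i + 1)) = D at *
    linear_combination (O * A * B * C * D * x ^ (2 * j ^ 2)) * h4
  · intro j _ hj
    have : n < 2 * j := by simp at hj; omega
    rw [hn (2 * j ^ 2) (by nlinarith)]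
    simp

end RS
section Count
open PowerSeries
open scoped Classical

/-- Generating function of the allowed multiplicities of the part `i`. -/
noncomputable def rsGF (C : ℕ → ℕ → Prop) (i : ℕ) : PowerSeries ℤ :=
  PowerSeries.mk fun m => if i ∣ m ∧ C i (m / i) then 1 else 0

lemma rs_count_zero {n : ℕ} (π : n.Partition) {i : ℕ} (hi : i ∉ Icc 1 n) :
    π.parts.count i = 0 := by
  rw [Multiset.count_eq_zero]
  intro h
  apply hi
  rw [mem_Icc]
  exact ⟨π.parts_pos h, (Multiset.le_sum_of_mem h).trans_eq π.parts_sum⟩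

lemma rs_count_mul_le {n : ℕ} (π : n.Partition) (i : ℕ) : π.parts.count i * i ≤ n := by
  have h1 : Multiset.replicate (π.parts.count i) i ≤ π.parts :=
    Multiset.le_count_iff_replicate_le.mp le_rfl
  obtain ⟨t, ht⟩ := Multiset.le_iff_exists_add.mp h1
  have h2 := congrArg Multiset.sum ht
  rw [π.parts_sum, Multiset.sum_add, Multiset.sum_replicate, smul_eq_mul] at h2
  omega

lemma rs_card (C : ℕ → ℕ → Prop) (n : ℕ) :
    (Nat.card {π : n.Partition // ∀ i ∈ Icc 1 n, C i (π.parts.count i)} : ℤ) =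
      coeff n (∏ i ∈ Icc 1 n, rsGF C i) := by
  rw [coeff_prod]
  simp only [rsGF, coeff_mk, prod_boole]
  rw [sum_boole, Nat.card_eq_fintype_card, Fintype.card_subtype]
  congr 1
  refine card_bij (fun π _ => π.toFinsuppAntidiag) ?_ ?_ ?_
  · intro π hπ
    simp only [mem_filter, mem_univ, true_and] at hπ ⊢
    refine ⟨π.toFinsuppAntidiag_mem_finsuppAntidiag, fun i hi => ?_⟩
    have hi0 : 0 < i := (mem_Icc.mp hi).1
    have e : π.toFinsuppAntidiag i = π.parts.count i * i := rfl
    rw [e, Nat.mul_div_cancel _ hi0]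
    exact ⟨Dvd.intro_left _ rfl, hπ i hi⟩
  · intro π _ π' _ h
    exact Nat.Partition.toFinsuppAntidiag_injective n h
  · intro l hl
    simp only [mem_filter, mem_finsuppAntidiag] at hl
    obtain ⟨⟨hs, hsup⟩, hC⟩ := hl
    have hcount : ∀ i, (∑ k ∈ Icc 1 n, Multiset.replicate (l k / k) k).count i =
        if i ∈ Icc 1 n then l i / i else 0 := by
      intro i
      rw [Multiset.count_sum']
      simp only [Multiset.count_replicate]
      rw [sum_ite_eq']
    let π : n.Partition :=
      { parts := ∑ k ∈ Icc 1 n, Multiset.replicate (l k / k) k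
        parts_pos := by
          intro i hi
          rw [← Multiset.count_pos, hcount] at hi
          by_cases h : i ∈ Icc 1 n
          · exact (mem_Icc.mp h).1
          · simp [h] at hi
        parts_sum := by
          have : (∑ k ∈ Icc 1 n, Multiset.replicate (l k / k) k).sum =
              ∑ k ∈ Icc 1 n, (Multiset.replicate (l k / k) k).sum :=
            map_sum (Multiset.sumAddMonoidHom (M := ℕ)) _ _
          rw [this]
          refine Eq.trans ?_ hs
          refine sum_congr rfl fun k hk => ?_
          rw [Multiset.sum_replicate, smul_eq_mul]
          exact Nat.div_mul_cancel (hC k hk).1 }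
    have hπ : ∀ i, π.parts.count i = if i ∈ Icc 1 n then l i / i else 0 := hcount
    refine ⟨π, ?_, ?_⟩
    · simp only [mem_filter, mem_univ, true_and]
      intro i hi
      rw [hπ, if_pos hi]
      exact (hC i hi).2
    · ext i
      have e : π.toFinsuppAntidiag i = π.parts.count i * i := rfl
      rw [e, hπ]
      by_cases h : i ∈ Icc 1 n
      · rw [if_pos h]; exact Nat.div_mul_cancel (hC i h).1
      · rw [if_neg h, zero_mul]
        by_contra h'
        exact h (hsup (Finsupp.mem_support_iff.mpr (Ne.symm h')))

lemma rsGF_two {C : ℕ → ℕ → Prop} {i : ℕ} (hi : 0 < i) (h : ∀ c, C i c ↔ c = 2) :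
    rsGF C i = X ^ (2 * i) := by
  ext m
  rw [rsGF, coeff_mk, coeff_X_pow]
  refine if_congr ?_ rfl rfl
  rw [h]
  constructor
  · rintro ⟨⟨c, rfl⟩, h2⟩
    rw [Nat.mul_div_cancel_left _ hi] at h2
    rw [h2, mul_comm]
  · rintro rfl
    exact ⟨Dvd.intro_left _ rfl, Nat.mul_div_cancel _ hi⟩

lemma rsGF_le_one {C : ℕ → ℕ → Prop} {i : ℕ} (hi : 0 < i) (h : ∀ c, C i c ↔ c ≤ 1) :
    rsGF C i = 1 + X ^ i := by
  ext m
  rw [rsGF, coeff_mk, map_add, coeff_X_pow, coeff_one, h]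
  by_cases h0 : m = 0
  · subst h0; simp [hi.ne]
  by_cases h1 : m = i
  · subst h1; simp [Nat.div_self hi, h0]
  · rw [if_neg, if_neg h0, if_neg h1, add_zero]
    rintro ⟨⟨c, rfl⟩, h2⟩
    rw [Nat.mul_div_cancel_left _ hi] at h2
    interval_cases c <;> simp_all

lemma rsGF_zero {C : ℕ → ℕ → Prop} {i : ℕ} (hi : 0 < i) (h : ∀ c, C i c ↔ c = 0) :
    rsGF C i = 1 := by
  ext m
  rw [rsGF, coeff_mk, coeff_one]
  refine if_congr ?_ rfl rfl
  rw [h]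
  constructor
  · rintro ⟨⟨c, rfl⟩, h2⟩
    rw [Nat.mul_div_cancel_left _ hi] at h2
    simp [h2]
  · rintro rfl; simp

lemma rsGF_all {C : ℕ → ℕ → Prop} {i : ℕ} (hi : 0 < i) (h : ∀ c, C i c) :
    rsGF C i * (1 - X ^ i) = 1 := by
  ext m
  rw [mul_sub, mul_one, map_sub, coeff_mul_X_pow', rsGF, coeff_mk, coeff_mk, coeff_one]
  simp only [h, and_true]
  by_cases h0 : m = 0
  · subst h0; simp [hi.ne']
  · by_cases h1 : i ≤ m
    · rw [if_pos h1, if_neg h0]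
      by_cases h2 : i ∣ m
      · have : i ∣ m - i := Nat.dvd_sub h2 dvd_rfl
        simp [*]
      · have : ¬ i ∣ m - i := fun h3 => h2 (by
          have := Nat.dvd_add h3 (dvd_refl i)
          rwa [Nat.sub_add_cancel h1] at this)
        simp [*]
    · have : ¬ i ∣ m := fun h3 => h1 (Nat.le_of_dvd (by omega) h3)
      simp [*]

/-- multiplicity condition for fixed `j` -/
def rsA (j i c : ℕ) : Prop :=
  if Odd i ∧ i < 2 * j then c = 2 else if 2 * j < i then c ≤ 1 else True

/-- multiplicity condition for the modulo 7 side -/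
def rsB (i c : ℕ) : Prop := (i % 7 ≠ 0 ∧ i % 7 ≠ 3 ∧ i % 7 ≠ 4) ∨ c = 0

lemma rs_prod_Icc {M : Type*} [CommMonoid M] (f : ℕ → M) (n : ℕ) :
    ∏ i ∈ Icc 1 n, f i = ∏ i ∈ range n, f (i + 1) := by
  induction n with
  | zero => simp
  | succ n ih => rw [prod_range_succ, ← ih, prod_Icc_succ_top (by omega)]

lemma rs_cardA (n : ℕ) :
    Nat.card {π : n.Partition // ∃ j : ℕ,
          (∀ o, Odd o → o < 2 * j → π.parts.count o = 2) ∧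
          (∀ p, 2 * j < p → π.parts.count p ≤ 1) ∧
          (∀ o, Odd o → 2 ≤ π.parts.count o → o < 2 * j)} =
      ∑ j ∈ range (n / 2 + 1),
        Nat.card {π : n.Partition // ∀ i ∈ Icc 1 n, rsA j i (π.parts.count i)} := by
  simp only [Nat.card_eq_fintype_card, Fintype.card_subtype]
  rw [← card_biUnion]
  · congr 1
    ext π
    simp only [mem_filter, mem_univ, true_and, mem_biUnion, mem_range]
    constructor
    · rintro ⟨j, h1, h2, h3⟩
      refine ⟨j, ?_, fun i hi => ?_⟩
      · rcases Nat.eq_zero_or_pos j with rfl | hj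
        · omega
        · have e := h1 (2 * j - 1) ⟨j - 1, by omega⟩ (by omega)
          have := rs_count_mul_le π (2 * j - 1)
          rw [e] at this
          omega
      · unfold rsA
        split_ifs with ha hb
        · exact h1 i ha.1 ha.2
        · exact h2 i hb
    · rintro ⟨j, hj, h⟩
      have h2 : ∀ p, 2 * j < p → π.parts.count p ≤ 1 := by
        intro p hp
        by_cases hi : p ∈ Icc 1 n
        · have := h p hi
          rw [rsA, if_neg (by omega), if_pos hp] at this
          exact this
        · rw [rs_count_zero π hi]; omega
      refine ⟨j, ?_, h2, ?_⟩
      · intro o ho hlt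
        have := h o (mem_Icc.mpr ⟨ho.pos, by omega⟩)
        rwa [rsA, if_pos ⟨ho, hlt⟩] at this
      · intro o ho hc
        by_contra hlt
        have : o ≠ 2 * j := by rintro rfl; exact (Nat.not_odd_iff_even.mpr (even_two_mul j)) ho
        have := h2 o (by omega)
        omega
  · have key : ∀ j j', j < j' → j' < n / 2 + 1 → ∀ π : n.Partition,
        (∀ i ∈ Icc 1 n, rsA j i (π.parts.count i)) →
        (∀ i ∈ Icc 1 n, rsA j' i (π.parts.count i)) → False := by
      intro j j' hlt hj' π h h'
      have hi : 2 * j + 1 ∈ Icc 1 n := mem_Icc.mpr ⟨by omega, by omega⟩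
      have e1 := h _ hi
      have e2 := h' _ hi
      rw [rsA, if_neg (by omega), if_pos (by omega)] at e1
      rw [rsA, if_pos ⟨⟨j, rfl⟩, by omega⟩] at e2
      omega
    intro j hj j' hj' hne
    rw [Function.onFun, disjoint_left]
    intro π h h'
    simp only [mem_filter, mem_univ, true_and] at h h'
    simp only [coe_range, Set.mem_Iio] at hj hj'
    rcases Nat.lt_or_gt_of_ne hne with hlt | hlt
    · exact key j j' hlt hj' π h h'
    · exact key j' j hlt hj π h' h

lemma rs_cardB (n : ℕ) :
    Nat.card {π : n.Partition // ∀ j ∈ π.parts, j % 7 ≠ 0 ∧ j % 7 ≠ 3 ∧ j % 7 ≠ 4} =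
      Nat.card {π : n.Partition // ∀ i ∈ Icc 1 n, rsB i (π.parts.count i)} := by
  refine Nat.card_congr (Equiv.subtypeEquivRight fun π => ?_)
  constructor
  · intro h i _
    by_cases hi : i ∈ π.parts
    · exact Or.inl (h i hi)
    · exact Or.inr (Multiset.count_eq_zero.mpr hi)
  · intro h i hi
    have hp := Multiset.count_pos.mpr hi
    by_cases hm : i ∈ Icc 1 n
    · rcases h i hm with h' | h'
      · exact h'
      · omega
    · have := rs_count_zero π hm
      omega

/-- pairing of the factors of the small parts -/
lemma rs_small {R : Type*} [CommRing R] (x : R) (F : ℕ → R) (j : ℕ)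
    (h1 : ∀ i < j, F (2 * i) = x ^ (2 * (2 * i + 1)))
    (h2 : ∀ i < j, F (2 * i + 1) * (1 - x ^ (2 * (i + 1))) = 1) :
    (∏ i ∈ range (2 * j), F i) * rsP x 2 j = x ^ (2 * j ^ 2) := by
  induction j with
  | zero => simp [rsP]
  | succ j ih =>
    specialize ih (fun i hi => h1 i (by omega)) (fun i hi => h2 i (by omega))
    rw [show 2 * (j + 1) = 2 * j + 1 + 1 by ring, prod_range_succ, prod_range_succ]
    have e : rsP x 2 (j + 1) = rsP x 2 j * (1 - x ^ (2 * (j + 1))) := by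
      rw [rsP, prod_range_succ, rsP]
    rw [e, h1 j (by omega)]
    have h3 := h2 j (by omega)
    linear_combination x ^ (2 * (2 * j + 1)) * ih +
      (∏ i ∈ range (2 * j), F i) * rsP x 2 j * x ^ (2 * (2 * j + 1)) * h3

lemma rs_mod7 {R : Type*} [CommRing R] {x : R} {n : ℕ} (hn : ∀ k, n < k → x ^ k = 0) :
    ∏ i ∈ range n, ((1 - x ^ (7 * i + 4)) * (1 - x ^ (7 * i + 3)) * (1 - x ^ (7 * i + 7))) =
      ∏ i ∈ range n, (if (i + 1) % 7 ≠ 0 ∧ (i + 1) % 7 ≠ 3 ∧ (i + 1) % 7 ≠ 4 then 1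
        else 1 - x ^ (i + 1)) := by
  set g : ℕ → R := fun i => (if (i + 1) % 7 ≠ 0 ∧ (i + 1) % 7 ≠ 3 ∧ (i + 1) % 7 ≠ 4 then 1
        else 1 - x ^ (i + 1)) with hg
  have h : ∀ m, ∏ i ∈ range m,
      ((1 - x ^ (7 * i + 4)) * (1 - x ^ (7 * i + 3)) * (1 - x ^ (7 * i + 7))) =
      ∏ i ∈ range (7 * m), g i := by
    intro m
    induction m with
    | zero => simp
    | succ m ih =>
      rw [prod_range_succ, ih, show 7 * (m + 1) = 7 * m + 1 + 1 + 1 + 1 + 1 + 1 + 1 by ring]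
      iterate 7 rw [prod_range_succ]
      have g0 : g (7 * m) = 1 := if_pos (by omega)
      have g1 : g (7 * m + 1) = 1 := if_pos (by omega)
      have g2 : g (7 * m + 1 + 1) = 1 - x ^ (7 * m + 3) := if_neg (by omega)
      have g3 : g (7 * m + 1 + 1 + 1) = 1 - x ^ (7 * m + 4) := if_neg (by omega)
      have g4 : g (7 * m + 1 + 1 + 1 + 1) = 1 := if_pos (by omega)
      have g5 : g (7 * m + 1 + 1 + 1 + 1 + 1) = 1 := if_pos (by omega)
      have g6 : g (7 * m + 1 + 1 + 1 + 1 + 1 + 1) = 1 - x ^ (7 * m + 7) := if_neg (by omega)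
      rw [g0, g1, g2, g3, g4, g5, g6]
      ring
  rw [h]
  symm
  apply prod_subset (range_mono (by omega))
  intro i _ hi
  have : n ≤ i := by simpa using hi
  change (if _ then (1 : R) else 1 - x ^ (i + 1)) = 1
  rw [hn (i + 1) (by omega)]
  simp

end Count
open PowerSeries in
theorem rs_final (n : ℕ) :
    coeff n (∑ j ∈ range (n / 2 + 1), ∏ i ∈ Icc 1 n, rsGF (rsA j) i) =
      coeff n (∏ i ∈ Icc 1 n, rsGF rsB i) := by
  set I : Ideal (PowerSeries ℤ) := Ideal.span {X ^ (n + 1)} with hI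
  set φ := Ideal.Quotient.mk I with hφ
  set x := φ X with hx
  have hn : ∀ k, n < k → x ^ k = 0 := by
    intro k hk
    rw [hx, ← map_pow, Ideal.Quotient.eq_zero_iff_mem, hI, Ideal.mem_span_singleton]
    exact pow_dvd_pow _ hk
  suffices h : φ (∑ j ∈ range (n / 2 + 1), ∏ i ∈ Icc 1 n, rsGF (rsA j) i) =
      φ (∏ i ∈ Icc 1 n, rsGF rsB i) by
    rw [Ideal.Quotient.eq, hI, Ideal.mem_span_singleton, X_pow_dvd_iff] at h
    have := h n (by omega)
    rw [map_sub] at this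
    exact sub_eq_zero.mp this
  have hE : IsUnit (∏ i ∈ range n, (1 - x ^ (i + 1))) := by
    have := rsP_unit hn one_pos n
    simpa [rsP] using this
  apply hE.mul_left_cancel
  have hm := rs_main hn
  have hA : φ (∑ j ∈ range (n / 2 + 1), ∏ i ∈ Icc 1 n, rsGF (rsA j) i) =
      ∑ j ∈ range (n / 2 + 1), x ^ (2 * j ^ 2) *
        rsU x 2 j * ∏ i ∈ Ico (2 * j) n, (1 + x ^ (i + 1)) := by
    rw [map_sum]
    refine sum_congr rfl fun j hj => ?_
    have hj' : 2 * j ≤ n := by simp at hj; omega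
    rw [rs_prod_Icc, map_prod, ← prod_range_mul_prod_Ico _ hj']
    congr 1
    · have hs := rs_small x (fun i => φ (rsGF (rsA j) (i + 1))) j ?_ ?_
      · rw [← hs, mul_assoc, rsU_mul hn (by norm_num), mul_one]
      · intro i hi
        rw [rsGF_two (by omega), map_pow]
        intro c
        rw [rsA, if_pos ⟨⟨i, rfl⟩, by omega⟩]
      · intro i hi
        have := rsGF_all (C := rsA j) (i := 2 * i + 1 + 1) (by omega) (by
          intro c
          rw [rsA, if_neg, if_neg (by omega)]
          · trivial
          · rintro ⟨⟨k, hk⟩, _⟩; omega)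
        have h2 := congrArg φ this
        rw [map_mul, map_sub, map_pow, map_one] at h2
        exact h2
    · refine prod_congr rfl fun i hi => ?_
      have hi' := (mem_Ico.mp hi).1
      rw [rsGF_le_one (by omega), map_add, map_pow, map_one]
      intro c
      rw [rsA, if_neg (by omega), if_pos (by omega)]
  rw [hA, hm, rs_mod7 hn, rs_prod_Icc, map_prod, ← prod_mul_distrib]
  refine prod_congr rfl fun i _ => ?_
  split_ifs with h
  · have := congrArg φ (rsGF_all (C := rsB) (i := i + 1) (by omega) (fun c => Or.inl h))
    rw [map_mul, map_sub, map_pow, map_one] at this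
    rw [mul_comm]
    exact this.symm
  · rw [rsGF_zero (by omega), map_one, mul_one]
    intro c
    rw [rsB]
    simp only [h, false_or]

/-- Interpretation of the third Rogers–Selberg identity: `A₃(n) = C_{3,3}(n)`.
A partition is counted by `A₃(n)` iff there exists `j ≥ 0` such that each odd integer
`1, 3, …, 2j-1` appears exactly twice, every part greater than `2j` appears at most once, and
every repeated odd part is among `1, 3, …, 2j-1`. -/
theorem A3_eq_C33 (n : ℕ) :
    Nat.card {π : n.Partition //
        ∃ j : ℕ,
          (∀ o, Odd o → o < 2 * j → π.parts.count o = 2) ∧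
          (∀ p, 2 * j < p → π.parts.count p ≤ 1) ∧
          (∀ o, Odd o → 2 ≤ π.parts.count o → o < 2 * j)} =
      Nat.card {π : n.Partition //
        ∀ j ∈ π.parts, j % 7 ≠ 0 ∧ j % 7 ≠ 3 ∧ j % 7 ≠ 4} := by
  rw [rs_cardA, rs_cardB]
  have h := rs_final n
  rw [map_sum, ← rs_card] at h
  simp only [← rs_card] at h
  exact_mod_cast h
end

section
/- For every natural number n, the number of partitions of n in which 1 does not appear as a part and, for every positive integer j, the total number of appearances of j and j+1 together is at most 2, equals the number of partitions of n such that, with 2j the largest repeated part, every positive even integer less than 2j appears at least twice, no odd part less than 2j+2 appears, each odd part appears at most once, and no part greater than 2j is repeated. -/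
/-- The largest repeated part of a partition (`0` if no part is repeated). -/
def largestRepeatedPart {n : ℕ} (π : n.Partition) : ℕ :=
  (π.parts.toFinset.filter (fun j => 2 ≤ π.parts.count j)).sup id

namespace RS

/-- Gordon-type multisets: parts `> s`, `s+1` at most `i` times, weight shifted by `c`. -/
def G (i s c n : ℕ) : Set (Multiset ℕ) :=
  {μ | μ.sum + c = n ∧ (∀ x ∈ μ, s < x) ∧ μ.count (s + 1) ≤ i ∧
    ∀ j, μ.count j + μ.count (j + 1) ≤ 2}

/-- Pairs `(J, μ)`: parts are even and `≤ 2J`, or distinct and `≥ 2J+b+1`. -/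
def W (a b c n : ℕ) : Set (ℕ × Multiset ℕ) :=
  {p | 2 * (p.1 * p.1) + 2 * (p.1 * a) + p.2.sum + c = n ∧
    ∀ x ∈ p.2, 0 < x ∧ ((x ≤ 2 * p.1 ∧ Even x) ∨ (2 * p.1 + b + 1 ≤ x ∧ p.2.count x ≤ 1))}

theorem split {α β γ : Type} (S : Set α) (A : Set β) (B : Set γ) (p : α → Prop)
    (f : β → α) (g : γ → α) (hf : Function.Injective f) (hg : Function.Injective g)
    (hfS : ∀ y ∈ A, f y ∈ S ∧ p (f y)) (hgS : ∀ y ∈ B, g y ∈ S ∧ ¬ p (g y))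
    (hfs : ∀ x ∈ S, p x → ∃ y ∈ A, f y = x) (hgs : ∀ x ∈ S, ¬ p x → ∃ y ∈ B, g y = x) :
    S.encard = A.encard + B.encard := by
  have h : S = Set.image f A ∪ Set.image g B := by
    ext x
    constructor
    · intro hx
      by_cases hp : p x
      · exact Or.inl (hfs x hx hp)
      · exact Or.inr (hgs x hx hp)
    · rintro (⟨y, hy, rfl⟩ | ⟨y, hy, rfl⟩)
      · exact (hfS y hy).1
      · exact (hgS y hy).1
  have hd : Disjoint (Set.image f A) (Set.image g B) := by
    rw [Set.disjoint_left]
    rintro x ⟨y, hy, rfl⟩ ⟨z, hz, hzy⟩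
    exact (hgS z hz).2 (hzy ▸ (hfS y hy).2)
  rw [h, Set.encard_union_eq hd, hf.encard_image, hg.encard_image]

theorem G_shift (i s c n : ℕ) (h : c ≤ n) : G i s c n = G i s 0 (n - c) := by
  ext μ
  simp only [G, Set.mem_ofPred_eq]
  have : μ.sum + c = n ↔ μ.sum + 0 = n - c := by omega
  rw [this]

theorem G_shift' (i s c n : ℕ) (h : n < c) : G i s c n = ∅ := by
  ext μ
  simp only [G, Set.mem_ofPred_eq, Set.mem_empty_iff_false, iff_false]
  intro h1
  omega

theorem W_shift (i s c n : ℕ) (h : c ≤ n) : W i s c n = W i s 0 (n - c) := by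
  ext ⟨J, μ⟩
  simp only [W, Set.mem_ofPred_eq]
  generalize 2 * (J * J) + 2 * (J * i) = e
  have : e + μ.sum + c = n ↔ e + μ.sum + 0 = n - c := by omega
  rw [this]

theorem W_shift' (i s c n : ℕ) (h : n < c) : W i s c n = ∅ := by
  ext μ
  simp only [W, Set.mem_ofPred_eq, Set.mem_empty_iff_false, iff_false]
  intro h1
  omega

theorem G_zero (s n : ℕ) : G 0 s 0 n = G 2 (s + 1) 0 n := by
  ext μ
  simp only [G, Set.mem_ofPred_eq]
  constructor
  · rintro ⟨h1, h2, h3, h4⟩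
    refine ⟨h1, fun x hx => ?_, ?_, h4⟩
    · have := h2 x hx
      rcases Nat.lt_or_ge (s + 1) x with h | h
      · exact h
      · obtain rfl : x = s + 1 := by omega
        have := Multiset.count_pos.2 hx
        omega
    · have := h4 (s + 1)
      omega
  · rintro ⟨h1, h2, h3, h4⟩
    refine ⟨h1, fun x hx => ?_, ?_, h4⟩
    · have := h2 x hx
      omega
    · rw [Multiset.count_eq_zero_of_notMem]
      intro h
      have := h2 _ h
      omega

theorem count_zero_of {μ : Multiset ℕ} {s : ℕ} (h : ∀ x ∈ μ, s < x) (j : ℕ) (hj : j ≤ s) :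
    μ.count j = 0 := by
  rw [Multiset.count_eq_zero]
  intro hm
  have := h _ hm
  omega

theorem lt_of_count {μ : Multiset ℕ} {s : ℕ} (h : ∀ j ≤ s, μ.count j = 0) :
    ∀ x ∈ μ, s < x := by
  intro x hx
  by_contra hc
  have := h x (by omega)
  have := Multiset.count_pos.2 hx
  omega

theorem G_one (s n : ℕ) :
    (G 1 s 0 n).encard = (G 0 s 0 n).encard + (G 1 (s + 1) (s + 1) n).encard := by
  refine split _ _ _ (fun μ => μ.count (s + 1) = 0) id (fun μ => (s + 1) ::ₘ μ)
    Function.injective_id (fun x y h => by simpa using h) ?_ ?_ ?_ ?_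
  · rintro μ ⟨h1, h2, h3, h4⟩
    exact ⟨⟨h1, h2, by simp only [id]; omega, h4⟩, by simp only [id]; omega⟩
  · rintro μ ⟨h1, h2, h3, h4⟩
    have h5 := count_zero_of h2
    have h6 := h5 (s + 1) le_rfl
    refine ⟨⟨by simp only [Multiset.sum_cons]; omega, ?_, ?_, ?_⟩, ?_⟩
    · intro x hx
      rcases Multiset.mem_cons.1 hx with rfl | hx
      · omega
      · have := h2 x hx
        omega
    · simp [h6]
    · intro j
      have := h4 j
      simp only [Multiset.count_cons]
      split_ifs with ha hb hb
      · omega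
      · subst ha; omega
      · have := h5 j (by omega)
        have := h5 (j + 1) (by omega)
        omega
      · omega
    · simp
  · rintro μ ⟨h1, h2, h3, h4⟩ hp
    exact ⟨μ, ⟨h1, h2, by omega, h4⟩, rfl⟩
  · rintro μ ⟨h1, h2, h3, h4⟩ hp
    have hm : s + 1 ∈ μ := by
      rw [← Multiset.count_pos]; omega
    obtain ⟨ν, rfl⟩ := Multiset.exists_cons_of_mem hm
    simp only [Multiset.count_cons, Multiset.sum_cons] at *
    have h5 := count_zero_of h2
    simp only [Multiset.count_cons] at h5
    simp only [if_true] at h3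
    refine ⟨ν, ⟨by omega, ?_, ?_, ?_⟩, rfl⟩
    · apply lt_of_count
      intro j hj
      rcases Nat.lt_or_ge s j with h | h
      · obtain rfl : j = s + 1 := by omega
        omega
      · have := h5 j h
        omega
    · have := h4 (s + 1)
      simp only [if_true] at this
      omega
    · intro j
      have := h4 j
      omega

theorem G_two (s n : ℕ) :
    (G 2 s 0 n).encard = (G 1 s 0 n).encard + (G 0 (s + 1) (2 * s + 2) n).encard := by
  refine split _ _ _ (fun μ => μ.count (s + 1) ≤ 1) id (fun μ => (s + 1) ::ₘ (s + 1) ::ₘ μ)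
    Function.injective_id (fun x y h => by simpa using h) ?_ ?_ ?_ ?_
  · rintro μ ⟨h1, h2, h3, h4⟩
    exact ⟨⟨h1, h2, by simp only [id]; omega, h4⟩, by simp only [id]; omega⟩
  · rintro μ ⟨h1, h2, h3, h4⟩
    have h5 := count_zero_of h2
    have h6 := h5 (s + 1) le_rfl
    refine ⟨⟨by simp only [Multiset.sum_cons]; omega, ?_, ?_, ?_⟩, ?_⟩
    · intro x hx
      simp only [Multiset.mem_cons] at hx
      rcases hx with rfl | rfl | hx
      · omega
      · omega
      · have := h2 x hx
        omega
    · simp [h6]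
    · intro j
      have := h4 j
      simp only [Multiset.count_cons]
      split_ifs with ha hb hb
      · omega
      · subst ha; omega
      · have := h5 j (by omega)
        have := h5 (j + 1) (by omega)
        omega
      · omega
    · simp
  · rintro μ ⟨h1, h2, h3, h4⟩ hp
    exact ⟨μ, ⟨h1, h2, by omega, h4⟩, rfl⟩
  · rintro μ ⟨h1, h2, h3, h4⟩ hp
    have hm : s + 1 ∈ μ := by
      rw [← Multiset.count_pos]; omega
    obtain ⟨ν', rfl⟩ := Multiset.exists_cons_of_mem hm
    have hm : s + 1 ∈ ν' := by
      rw [← Multiset.count_pos]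
      simp only [Multiset.count_cons_self] at hp
      omega
    obtain ⟨ν, rfl⟩ := Multiset.exists_cons_of_mem hm
    simp only [Multiset.count_cons, Multiset.sum_cons] at *
    have h5 := count_zero_of h2
    simp only [Multiset.count_cons] at h5
    simp only [if_true] at h3
    refine ⟨ν, ⟨by omega, ?_, ?_, ?_⟩, rfl⟩
    · apply lt_of_count
      intro j hj
      rcases Nat.lt_or_ge s j with h | h
      · obtain rfl : j = s + 1 := by omega
        omega
      · have := h5 j h
        omega
    · have := h4 (s + 1)
      simp only [if_true] at this
      omega
    · intro j
      have := h4 j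
      omega

theorem W_one (a b n : ℕ) :
    (W a b 0 n).encard = (W a (b + 1) 0 n).encard + (W (a + 1) (b + 1) (b + 1) n).encard := by
  refine split _ _ _ (fun p => 2 * p.1 + b + 1 ∉ p.2) id
    (fun p => (p.1, (2 * p.1 + b + 1) ::ₘ p.2)) Function.injective_id ?_ ?_ ?_ ?_ ?_
  · rintro ⟨J, μ⟩ ⟨K, ν⟩ h
    simp only [Prod.mk.injEq] at h
    obtain ⟨rfl, h⟩ := h
    simpa using h
  · rintro ⟨J, μ⟩ ⟨h1, h2⟩
    simp only at h1 h2
    refine ⟨⟨h1, fun x hx => ?_⟩, fun hm => ?_⟩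
    · have := h2 x hx
      simp only [id]
      refine ⟨this.1, this.2.imp id fun h => ⟨by omega, h.2⟩⟩
    · simp only [id] at hm
      have := h2 _ hm
      omega
  · rintro ⟨J, μ⟩ ⟨h1, h2⟩
    simp only at h1 h2
    have h0 : 2 * J + b + 1 ∉ μ := fun hm => by
      have := h2 _ hm
      omega
    refine ⟨⟨?_, fun x hx => ?_⟩, ?_⟩
    · simp only [Multiset.sum_cons]
      rw [← h1]; ring
    · simp only at hx ⊢
      rcases Multiset.mem_cons.1 hx with rfl | hx
      · refine ⟨by omega, Or.inr ⟨le_rfl, ?_⟩⟩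
        simp [Multiset.count_eq_zero_of_notMem h0]
      · obtain ⟨h3, h4⟩ := h2 x hx
        refine ⟨h3, h4.imp id fun h => ⟨by omega, ?_⟩⟩
        rw [Multiset.count_cons_of_ne (by omega)]
        exact h.2
    · simp
  · rintro ⟨J, μ⟩ ⟨h1, h2⟩ hp
    simp only at h1 h2 hp
    refine ⟨(J, μ), ⟨h1, fun x hx => ?_⟩, rfl⟩
    have := h2 x hx
    simp only
    have hne : x ≠ 2 * J + b + 1 := fun h => hp (h ▸ hx)
    exact ⟨this.1, this.2.imp id fun h => ⟨by omega, h.2⟩⟩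
  · rintro ⟨J, μ⟩ ⟨h1, h2⟩ hp
    simp only [not_not] at h1 h2 hp
    obtain ⟨ν, rfl⟩ := Multiset.exists_cons_of_mem hp
    refine ⟨(J, ν), ⟨?_, fun x hx => ?_⟩, rfl⟩
    · simp only [Multiset.sum_cons] at h1 ⊢
      rw [← h1]; ring
    · simp only
      have h0 : 2 * J + b + 1 ∉ ν := fun hm => by
        have := h2 _ hp
        have h3 := Multiset.count_pos.2 hm
        rw [Multiset.count_cons_self] at this
        omega
      have hne : x ≠ 2 * J + b + 1 := fun h => h0 (h ▸ hx)
      have := h2 x (Multiset.mem_cons_of_mem hx)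
      rw [Multiset.count_cons_of_ne hne] at this
      exact ⟨this.1, this.2.imp id fun h => ⟨by omega, h.2⟩⟩

theorem W_two (a b n : ℕ) :
    (W a b 0 n).encard = (W (a + 1) b 0 n).encard +
      (W (a + 2) (b + 2) (2 * a + 2) n).encard := by
  refine split _ _ _ (fun p => p.1 = 0 ∨ 2 * p.1 ∈ p.2)
    (fun p => (p.1, if p.1 = 0 then p.2 else (2 * p.1) ::ₘ p.2))
    (fun p => (p.1 + 1, p.2)) ?_ ?_ ?_ ?_ ?_ ?_
  · rintro ⟨J, μ⟩ ⟨K, ν⟩ h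
    simp only [Prod.mk.injEq] at h
    obtain ⟨rfl, h⟩ := h
    split_ifs at h
    · simpa using h
    · simpa using h
  · rintro ⟨J, μ⟩ ⟨K, ν⟩ h
    simpa using h
  · rintro ⟨J, μ⟩ ⟨h1, h2⟩
    simp only at h1 h2
    by_cases hJ : J = 0
    · subst hJ
      refine ⟨⟨?_, ?_⟩, Or.inl rfl⟩
      · simpa using h1
      · simpa using h2
    · refine ⟨⟨?_, ?_⟩, Or.inr ?_⟩
      · simp only [if_neg hJ, Multiset.sum_cons]
        rw [← h1]; ring
      · simp only [if_neg hJ]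
        intro x hx
        rcases Multiset.mem_cons.1 hx with rfl | hx
        · exact ⟨by omega, Or.inl ⟨le_rfl, even_two_mul J⟩⟩
        · obtain ⟨h3, h4⟩ := h2 x hx
          refine ⟨h3, h4.imp id fun h => ⟨h.1, ?_⟩⟩
          rw [Multiset.count_cons_of_ne (by omega)]
          exact h.2
      · simp [hJ]
  · rintro ⟨J, μ⟩ ⟨h1, h2⟩
    simp only at h1 h2
    refine ⟨⟨?_, fun x hx => ?_⟩, ?_⟩
    · simp only
      rw [← h1]; ring
    · simp only at hx ⊢
      obtain ⟨h3, h4⟩ := h2 x hx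
      exact ⟨h3, h4.imp (fun h => ⟨by omega, h.2⟩) fun h => ⟨by omega, h.2⟩⟩
    · simp only
      rintro (h | h)
      · omega
      · have := h2 _ h
        omega
  · rintro ⟨J, μ⟩ ⟨h1, h2⟩ hp
    simp only at h1 h2 hp
    by_cases hJ : J = 0
    · subst hJ
      refine ⟨(0, μ), ⟨?_, ?_⟩, by simp⟩
      · simpa using h1
      · simpa using h2
    · have hm := hp.resolve_left hJ
      obtain ⟨ν, rfl⟩ := Multiset.exists_cons_of_mem hm
      refine ⟨(J, ν), ⟨?_, fun x hx => ?_⟩, by simp [hJ]⟩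
      · simp only [Multiset.sum_cons] at h1 ⊢
        rw [← h1]; ring
      · simp only
        obtain ⟨h3, h4⟩ := h2 x (Multiset.mem_cons_of_mem hx)
        refine ⟨h3, h4.imp id fun h => ⟨h.1, ?_⟩⟩
        exact (Multiset.count_le_count_cons _ _ _).trans h.2
  · rintro ⟨J, μ⟩ ⟨h1, h2⟩ hp
    simp only [not_or] at h1 h2 hp
    obtain ⟨K, rfl⟩ := Nat.exists_eq_succ_of_ne_zero hp.1
    simp only [Nat.succ_eq_add_one] at *
    refine ⟨(K, μ), ⟨?_, fun x hx => ?_⟩, rfl⟩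
    · simp only
      rw [← h1]; ring
    · simp only
      obtain ⟨h3, h4⟩ := h2 x hx
      have hne : x ≠ 2 * (K + 1) := fun h => hp.2 (h ▸ hx)
      refine ⟨h3, h4.imp (fun h => ⟨?_, h.2⟩) fun h => ⟨by omega, h.2⟩⟩
      obtain ⟨r, hr⟩ := h.2
      omega

theorem sum_small {μ : Multiset ℕ} {s : ℕ} (h : ∀ x ∈ μ, s < x) (hs : μ.sum ≤ s) : μ = 0 := by
  rw [Multiset.eq_zero_iff_forall_notMem]
  intro x hx
  have := h x hx
  have := Multiset.le_sum_of_mem hx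
  omega

theorem G_base (i s n : ℕ) (h : n ≤ s) : G i s 0 n = if n = 0 then {0} else ∅ := by
  ext μ
  constructor
  · rintro ⟨h1, h2, h3, h4⟩
    obtain rfl := sum_small h2 (by omega)
    have : n = 0 := by simpa using h1.symm
    simp [this]
  · intro hm
    split_ifs at hm with hn
    · subst hn
      obtain rfl : μ = 0 := hm
      simp [G]
    · exact hm.elim

theorem W_base (a b n : ℕ) (h : n ≤ b) (h' : n ≤ a) :
    W a b 0 n = if n = 0 then {(0, 0)} else ∅ := by
  ext ⟨J, μ⟩
  constructor
  · rintro ⟨h1, h2⟩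
    simp only at h1 h2
    have hJ : J = 0 := by
      by_contra hJ
      have h3 : 1 * 1 ≤ J * J := Nat.mul_le_mul (by omega) (by omega)
      have h4 : 1 * a ≤ J * a := Nat.mul_le_mul (by omega) le_rfl
      omega
    subst hJ
    obtain rfl := sum_small (s := b) (fun x hx => by have := h2 x hx; omega) (by omega)
    have : n = 0 := by simpa using h1.symm
    simp [this]
  · intro hm
    split_ifs at hm with hn
    · subst hn
      obtain ⟨rfl, rfl⟩ : J = 0 ∧ μ = 0 := by simpa using hm
      simp [W]
    · exact hm.elim

theorem main (d : ℕ) : ∀ s n, n ≤ s + d →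
    (G 2 s 0 n).encard = (W s s 0 n).encard ∧
    (G 1 s 0 n).encard = (W (s + 1) s 0 n).encard ∧
    (G 0 s 0 n).encard = (W (s + 1) (s + 1) 0 n).encard := by
  induction d with
  | zero =>
    intro s n h
    rw [Nat.add_zero] at h
    rw [G_base _ _ _ h, G_base _ _ _ h, G_base _ _ _ h, W_base _ _ _ h h,
      W_base _ _ _ h (by omega), W_base _ _ _ (by omega) (by omega)]
    split_ifs <;> simp
  | succ d ih =>
    intro s n h
    have h0 : (G 0 s 0 n).encard = (W (s + 1) (s + 1) 0 n).encard := by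
      rw [G_zero]
      exact (ih (s + 1) n (by omega)).1
    have h1 : (G 1 s 0 n).encard = (W (s + 1) s 0 n).encard := by
      rw [G_one, W_one, h0]
      congr 1
      rcases Nat.lt_or_ge n (s + 1) with hn | hn
      · rw [G_shift' _ _ _ _ hn, W_shift' _ _ _ _ hn]; simp
      · rw [G_shift _ _ _ _ hn, W_shift _ _ _ _ hn]
        exact (ih (s + 1) _ (by omega)).2.1
    refine ⟨?_, h1, h0⟩
    rw [G_two, W_two, h1]
    congr 1
    rcases Nat.lt_or_ge n (2 * s + 2) with hn | hn
    · rw [G_shift' _ _ _ _ hn, W_shift' _ _ _ _ hn]; simp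
    · rw [G_shift _ _ _ _ hn, W_shift _ _ _ _ hn]
      exact (ih (s + 1) _ (by omega)).2.2

/-- Each of `2, 4, …, 2J` twice. -/
def St : ℕ → Multiset ℕ
  | 0 => 0
  | J + 1 => (2 * J + 2) ::ₘ (2 * J + 2) ::ₘ St J

theorem St_sum (J : ℕ) : (St J).sum = 2 * (J * J) + 2 * (J * 1) := by
  induction J with
  | zero => rfl
  | succ J ih =>
    simp only [St, Multiset.sum_cons, ih]
    ring

theorem St_count (J x : ℕ) :
    (St J).count x = if 0 < x ∧ x ≤ 2 * J ∧ x % 2 = 0 then 2 else 0 := by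
  induction J with
  | zero =>
    rw [if_neg (by omega)]
    rfl
  | succ J ih =>
    simp only [St, Multiset.count_cons, ih]
    split_ifs <;> omega

/-- Largest repeated part. -/
def lr (μ : Multiset ℕ) : ℕ := (μ.toFinset.filter (fun j => 2 ≤ μ.count j)).sup id

theorem le_lr {μ : Multiset ℕ} {x : ℕ} (h : 2 ≤ μ.count x) : x ≤ lr μ := by
  unfold lr
  refine Finset.le_sup (f := id) (Finset.mem_filter.2 ⟨?_, h⟩)
  rw [Multiset.mem_toFinset, ← Multiset.count_pos]
  omega

theorem lr_le {μ : Multiset ℕ} {r : ℕ} (h : ∀ x, 2 ≤ μ.count x → x ≤ r) : lr μ ≤ r := by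
  unfold lr
  refine Finset.sup_le fun x hx => h x (Finset.mem_filter.1 hx).2

theorem lr_count {μ : Multiset ℕ} (h : lr μ ≠ 0) : 2 ≤ μ.count (lr μ) := by
  have hne : (μ.toFinset.filter (fun j => 2 ≤ μ.count j)).Nonempty := by
    by_contra hc
    rw [Finset.not_nonempty_iff_eq_empty] at hc
    apply h
    unfold lr
    rw [hc]
    rfl
  obtain ⟨x, hx, hx'⟩ := Finset.exists_mem_eq_sup _ hne id
  have h2 := (Finset.mem_filter.1 hx).2
  have : lr μ = x := hx'
  rw [this]
  exact h2

/-- The `A₁` family as multisets. -/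
def A (n : ℕ) : Set (Multiset ℕ) :=
  {μ | μ.sum = n ∧ (∀ x ∈ μ, 0 < x) ∧
    (∀ j, Odd j → μ.count j ≤ 1) ∧
    (∀ j, Odd j → j < lr μ + 2 → μ.count j = 0) ∧
    (∀ j, Even j → 0 < j → j < lr μ → 2 ≤ μ.count j)}

theorem W_count {J b : ℕ} {μ : Multiset ℕ}
    (h : ∀ x ∈ μ, 0 < x ∧ ((x ≤ 2 * J ∧ Even x) ∨ (2 * J + b + 1 ≤ x ∧ μ.count x ≤ 1)))
    (x : ℕ) : μ.count x = 0 ∨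
      (0 < x ∧ ((x ≤ 2 * J ∧ x % 2 = 0) ∨ (2 * J + b + 1 ≤ x ∧ μ.count x ≤ 1))) := by
  by_cases hx : x ∈ μ
  · right
    have := h x hx
    rwa [Nat.even_iff] at this
  · left
    exact Multiset.count_eq_zero_of_notMem hx

theorem lr_add {J : ℕ} {μ : Multiset ℕ}
    (h : ∀ x ∈ μ, 0 < x ∧ ((x ≤ 2 * J ∧ Even x) ∨ (2 * J + 1 + 1 ≤ x ∧ μ.count x ≤ 1))) :
    lr (μ + St J) = 2 * J := by
  have hc := W_count h
  apply le_antisymm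
  · apply lr_le
    intro x hx
    rw [Multiset.count_add, St_count] at hx
    have := hc x
    split_ifs at hx <;> omega
  · rcases Nat.eq_zero_or_pos J with rfl | hJ
    · omega
    · apply le_lr
      rw [Multiset.count_add, St_count, if_pos (by omega)]
      omega

theorem A_eq (n : ℕ) : (A n).encard = (W 1 1 0 n).encard := by
  have hinj : Set.InjOn (fun p : ℕ × Multiset ℕ => p.2 + St p.1) (W 1 1 0 n) := by
    rintro ⟨J, μ⟩ ⟨h1, h2⟩ ⟨K, ν⟩ ⟨h3, h4⟩ h
    simp only at h h2 h4
    have hJ := lr_add h2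
    have hK := lr_add h4
    rw [h, hK] at hJ
    obtain rfl : K = J := by omega
    simpa using h
  rw [← hinj.encard_image]
  congr 1
  ext μ
  constructor
  · rintro ⟨h1, h2, h3, h4, h5⟩
    have hev : lr μ % 2 = 0 := by
      by_contra hc
      have ho : Odd (lr μ) := Nat.odd_iff.2 (by omega)
      have := h3 _ ho
      have := lr_count (μ := μ) (by omega)
      omega
    obtain ⟨J, hJ⟩ : ∃ J, lr μ = 2 * J := ⟨lr μ / 2, by omega⟩
    have hle : St J ≤ μ := by
      rw [Multiset.le_iff_count]
      intro x
      rw [St_count]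
      split_ifs with hx
      · rcases Nat.lt_or_ge x (lr μ) with hl | hl
        · exact h5 x (Nat.even_iff.2 hx.2.2) hx.1 hl
        · obtain rfl : x = lr μ := by omega
          exact lr_count (by omega)
      · omega
    obtain ⟨ν, rfl⟩ := Multiset.le_iff_exists_add.1 hle
    refine ⟨(J, ν), ⟨?_, fun x hx => ?_⟩, ?_⟩
    · rw [Multiset.sum_add, St_sum] at h1
      simp only
      omega
    · simp only at hx ⊢
      refine ⟨h2 x (by simp [hx]), ?_⟩
      have hp := Multiset.count_pos.2 hx
      rw [Nat.even_iff]
      have h6 := h4 x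
      rw [hJ, Nat.odd_iff, Multiset.count_add] at h6
      have h7 : 2 ≤ (St J + ν).count x → x ≤ lr (St J + ν) := le_lr
      rw [hJ, Multiset.count_add] at h7
      omega
    · simp only
      rw [add_comm]
  · rintro ⟨⟨J, ν⟩, ⟨h1, h2⟩, rfl⟩
    simp only at h1 h2
    have hc := W_count h2
    have hl := lr_add h2
    refine ⟨?_, ?_, ?_, ?_, ?_⟩
    · simp only
      rw [Multiset.sum_add, St_sum]
      omega
    · intro x hx
      have := Multiset.count_pos.2 hx
      simp only [Multiset.count_add, St_count] at this
      have := hc x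
      split_ifs at * <;> omega
    · intro j hj
      rw [Nat.odd_iff] at hj
      simp only [Multiset.count_add, St_count]
      have := hc j
      split_ifs <;> omega
    · intro j hj hlt
      rw [Nat.odd_iff] at hj
      simp only [hl] at hlt
      simp only [Multiset.count_add, St_count]
      have := hc j
      split_ifs <;> omega
    · intro j hj hj0 hlt
      rw [Nat.even_iff] at hj
      simp only [hl] at hlt
      simp only [Multiset.count_add, St_count]
      rw [if_pos (by omega)]
      omega

theorem card_partition (n : ℕ) (P : Multiset ℕ → Prop) :
    Nat.card {π : n.Partition // P π.parts} =
      {μ : Multiset ℕ | μ.sum = n ∧ (∀ x ∈ μ, 0 < x) ∧ P μ}.ncard := by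
  rw [← Nat.card_coe_set_eq]
  refine Nat.card_congr
    { toFun := fun π => ⟨π.1.parts, π.1.parts_sum, fun x hx => π.1.parts_pos hx, π.2⟩
      invFun := fun μ => ⟨⟨μ.1, fun {x} hx => μ.2.2.1 x hx, μ.2.1⟩, μ.2.2.2⟩
      left_inv := fun π => rfl
      right_inv := fun μ => rfl }

end RS

/-- The bijection `f : 𝒢₁ → 𝒜₁`: the number of partitions of `n` counted by Gordon's
`G_{3,1}(n)` (no part equal to `1`, and `j` and `j+1` together appear at most twice) equals
the number counted by `A₁(n)`. -/
theorem G31_eq_A1 (n : ℕ) :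
    Nat.card {π : n.Partition //
        π.parts.count 1 = 0 ∧
        (∀ j, 1 ≤ j → π.parts.count j + π.parts.count (j + 1) ≤ 2)} =
      Nat.card {π : n.Partition //
        (∀ j, Odd j → π.parts.count j ≤ 1) ∧
        (∀ j, Odd j → j < largestRepeatedPart π + 2 → π.parts.count j = 0) ∧
        (∀ j, Even j → 0 < j → j < largestRepeatedPart π → 2 ≤ π.parts.count j)} := by
  have hG := RS.card_partition n (fun μ => μ.count 1 = 0 ∧
        (∀ j, 1 ≤ j → μ.count j + μ.count (j + 1) ≤ 2))
  have hA := RS.card_partition n (fun μ => (∀ j, Odd j → μ.count j ≤ 1) ∧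
    (∀ j, Odd j → j < RS.lr μ + 2 → μ.count j = 0) ∧
    (∀ j, Even j → 0 < j → j < RS.lr μ → 2 ≤ μ.count j))
  refine hG.trans (Eq.trans ?_ hA.symm)
  have hGs : {μ : Multiset ℕ | μ.sum = n ∧ (∀ x ∈ μ, 0 < x) ∧ μ.count 1 = 0 ∧
        (∀ j, 1 ≤ j → μ.count j + μ.count (j + 1) ≤ 2)} = RS.G 0 0 0 n := by
    ext μ
    constructor
    · rintro ⟨h1, h2, h3, h4⟩
      refine ⟨h1, h2, h3.le, fun j => ?_⟩
      rcases Nat.eq_zero_or_pos j with rfl | hj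
      · have := RS.count_zero_of h2 0 le_rfl
        simp only [zero_add]
        omega
      · exact h4 j hj
    · rintro ⟨h1, h2, h3, h4⟩
      exact ⟨h1, h2, Nat.le_zero.1 h3, fun j _ => h4 j⟩
  rw [hGs]
  change (RS.G 0 0 0 n).ncard = (RS.A n).ncard
  unfold Set.ncard
  rw [(RS.main n 0 n (by omega)).2.2, RS.A_eq]
end

section
/- For every natural number n, the number of partitions of n in which, for every positive integer j, the total number of appearances of j and j+1 together is at most 2, equals the number of partitions of n for which there exists j ≥ 0 such that each odd integer 1, 3, ..., 2j−1 appears exactly twice, no odd integer greater than 2j−1 is repeated, and no part greater than 2j appears more than once. -/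
/-- Abstract system: objects with two statistics and three constructors giving the recurrences. -/
structure GSys (α : Type) where
  P3 : α → Prop
  P2 : α → Prop
  c : α → ℕ
  w : α → ℕ
  f : α → α
  g : α → α
  h : α → α
  e : α
  p23 : ∀ s, P2 s → P3 s
  f3 : ∀ t, P3 t → P3 (f t)
  f2 : ∀ t, P3 t → ¬ P2 (f t)
  g2 : ∀ t, P3 t → P2 (g t)
  h2 : ∀ t, P2 t → P2 (h t)
  dec3 : ∀ s, P3 s → ¬ P2 s → ∃ t, P3 t ∧ f t = s
  dec2 : ∀ s, P2 s → c s ≠ 0 → (∃ t, P3 t ∧ g t = s) ∨ (∃ t, P2 t ∧ h t = s)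
  gh : ∀ t t', P3 t → P2 t' → g t ≠ h t'
  cf : ∀ t, c (f t) = c t + 2
  cg : ∀ t, c (g t) = c t
  ch : ∀ t, c (h t) = c t + 1
  wf : ∀ t, P3 t → w (f t) = w t + 2 * c t + 2
  wg : ∀ t, P3 t → w (g t) = w t + c t
  wh : ∀ t, P2 t → w (h t) = w t + c t + 1
  finj : ∀ t t', P3 t → P3 t' → f t = f t' → t = t'
  ginj : ∀ t t', P3 t → P3 t' → g t = g t' → t = t'
  hinj : ∀ t t', P2 t → P2 t' → h t = h t' → t = t'
  pe : P2 e
  ce : c e = 0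
  we : w e = 0
  eu : ∀ s, P2 s → c s = 0 → s = e

namespace GSys
variable {α : Type} (S : GSys α)

def S3 (m n : ℕ) : Set α := {t | S.P3 t ∧ S.c t = m ∧ S.w t = n}
def S2 (m n : ℕ) : Set α := {t | S.P2 t ∧ S.c t = m ∧ S.w t = n}

open Cardinal

theorem rec_zero (n : ℕ) : #(S.S2 0 n) = if n = 0 then 1 else 0 := by
  split_ifs with hn
  · have : S.S2 0 n = {S.e} := by
      ext s
      simp only [S2, Set.mem_setOf_eq, Set.mem_singleton_iff]
      constructor
      · rintro ⟨a, b, -⟩; exact S.eu s a b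
      · rintro rfl; exact ⟨S.pe, S.ce, by rw [S.we, hn]⟩
    rw [this]; simp
  · have : S.S2 0 n = ∅ := by
      ext s
      simp only [S2, Set.mem_setOf_eq, Set.mem_empty_iff_false, iff_false]
      rintro ⟨a, b, d⟩
      rw [S.eu s a b, S.we] at d; omega
    rw [this]; simp

theorem rec_two (m n : ℕ) : #(S.S2 (m + 1) n) =
    if m + 1 ≤ n then #(S.S3 (m + 1) (n - (m + 1))) + #(S.S2 m (n - (m + 1))) else 0 := by
  split_ifs with hn
  · have : S.S2 (m + 1) n = S.g '' (S.S3 (m + 1) (n - (m + 1))) ∪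
        S.h '' (S.S2 m (n - (m + 1))) := by
      ext s
      simp only [S2, S3, Set.mem_setOf_eq, Set.mem_union, Set.mem_image]
      constructor
      · rintro ⟨a, b, d⟩
        rcases S.dec2 s a (by omega) with ⟨t, ht, rfl⟩ | ⟨t, ht, rfl⟩
        · left
          have := S.cg t; have := S.wg t ht
          exact ⟨t, ⟨ht, by omega, by omega⟩, rfl⟩
        · right
          have := S.ch t; have := S.wh t ht
          exact ⟨t, ⟨ht, by omega, by omega⟩, rfl⟩
      · rintro (⟨t, ⟨ht, a, b⟩, rfl⟩ | ⟨t, ⟨ht, a, b⟩, rfl⟩)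
        · have := S.cg t; have := S.wg t ht
          exact ⟨S.g2 t ht, by omega, by omega⟩
        · have := S.ch t; have := S.wh t ht
          exact ⟨S.h2 t ht, by omega, by omega⟩
    rw [this, mk_union_of_disjoint, mk_image_eq_of_injOn, mk_image_eq_of_injOn]
    · intro t ht t' ht' hh; exact S.hinj t t' ht.1 ht'.1 hh
    · intro t ht t' ht' hh; exact S.ginj t t' ht.1 ht'.1 hh
    · rw [Set.disjoint_left]
      rintro _ ⟨t, ht, rfl⟩ ⟨t', ht', h'⟩
      exact S.gh t t' ht.1 ht'.1 h'.symm
  · have : S.S2 (m + 1) n = ∅ := by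
      ext s
      simp only [S2, Set.mem_setOf_eq, Set.mem_empty_iff_false, iff_false]
      rintro ⟨a, b, d⟩
      rcases S.dec2 s a (by omega) with ⟨t, ht, rfl⟩ | ⟨t, ht, rfl⟩
      · have := S.cg t; have := S.wg t ht
        omega
      · have := S.ch t; have := S.wh t ht
        omega
    rw [this]; simp

theorem rec_three (m n : ℕ) : #(S.S3 m n) = #(S.S2 m n) +
    if 2 ≤ m ∧ 2 * m - 2 ≤ n then #(S.S3 (m - 2) (n - (2 * m - 2))) else 0 := by
  split_ifs with hn
  · have : S.S3 m n = S.S2 m n ∪ S.f '' (S.S3 (m - 2) (n - (2 * m - 2))) := by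
      ext s
      simp only [S2, S3, Set.mem_setOf_eq, Set.mem_union, Set.mem_image]
      constructor
      · rintro ⟨a, b, d⟩
        by_cases h2 : S.P2 s
        · exact Or.inl ⟨h2, b, d⟩
        · right
          obtain ⟨t, ht, rfl⟩ := S.dec3 s a h2
          have := S.cf t; have := S.wf t ht
          exact ⟨t, ⟨ht, by omega, by omega⟩, rfl⟩
      · rintro (⟨a, b, d⟩ | ⟨t, ⟨ht, a, b⟩, rfl⟩)
        · exact ⟨S.p23 s a, b, d⟩
        · have := S.cf t; have := S.wf t ht
          exact ⟨S.f3 t ht, by omega, by omega⟩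
    rw [this, mk_union_of_disjoint, mk_image_eq_of_injOn]
    · intro t ht t' ht' hh; exact S.finj t t' ht.1 ht'.1 hh
    · rw [Set.disjoint_left]
      rintro _ h1 ⟨t', ht', rfl⟩
      exact S.f2 t' ht'.1 h1.1
  · have : S.S3 m n = S.S2 m n := by
      ext s
      simp only [S2, S3, Set.mem_setOf_eq]
      constructor
      · rintro ⟨a, b, d⟩
        by_cases h2 : S.P2 s
        · exact ⟨h2, b, d⟩
        · obtain ⟨t, ht, rfl⟩ := S.dec3 s a h2
          have := S.cf t; have := S.wf t ht
          omega
      · rintro ⟨a, b, d⟩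
        exact ⟨S.p23 s a, b, d⟩
    rw [this]; simp

theorem mk_eq {β : Type} (T : GSys β) (n : ℕ) :
    ∀ m, #(S.S2 m n) = #(T.S2 m n) ∧ #(S.S3 m n) = #(T.S3 m n) := by
  induction n using Nat.strong_induction_on with
  | _ n ih =>
    intro m
    have h2 : #(S.S2 m n) = #(T.S2 m n) := by
      rcases m with _ | m
      · rw [rec_zero, rec_zero]
      · rw [rec_two, rec_two]
        split_ifs with hn
        · rw [(ih _ (by omega) _).1, (ih _ (by omega) _).2]
        · rfl
    refine ⟨h2, ?_⟩
    rw [S.rec_three m n, T.rec_three m n, h2]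
    split_ifs with hn
    · rw [(ih _ (by omega) _).2]
    · rfl

theorem card_eq {β : Type} (T : GSys β) (n : ℕ) :
    Nat.card {t // S.P3 t ∧ S.w t = n} = Nat.card {t // T.P3 t ∧ T.w t = n} := by
  have key : ∀ m, Nonempty ({x : {t // S.P3 t ∧ S.w t = n} // S.c x.1 = m} ≃
      {x : {t // T.P3 t ∧ T.w t = n} // T.c x.1 = m}) := by
    intro m
    obtain ⟨φ⟩ := Cardinal.eq.1 (S.mk_eq T n m).2
    refine ⟨Equiv.trans ?_ (φ.trans ?_)⟩
    · exact ⟨fun x => ⟨x.1.1, x.1.2.1, x.2, x.1.2.2⟩, fun x => ⟨⟨x.1, x.2.1, x.2.2.2⟩, x.2.2.1⟩,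
        fun _ => rfl, fun _ => rfl⟩
    · exact ⟨fun x => ⟨⟨x.1, x.2.1, x.2.2.2⟩, x.2.2.1⟩, fun x => ⟨x.1.1, x.1.2.1, x.2, x.1.2.2⟩,
        fun _ => rfl, fun _ => rfl⟩
  exact Nat.card_congr (((Equiv.sigmaFiberEquiv _).symm.trans
    (Equiv.sigmaCongrRight fun m => (key m).some)).trans (Equiv.sigmaFiberEquiv _))

end GSys

theorem ms_decomp (s : Multiset ℕ) (hs : 0 ∉ s) :
    ∃ (k : ℕ) (t : Multiset ℕ), 0 ∉ t ∧ s = Multiset.replicate k 1 + t.map (· + 1) := by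
  induction s using Multiset.induction_on with
  | empty => exact ⟨0, 0, by simp, by simp⟩
  | cons a s ih =>
    simp only [Multiset.mem_cons, not_or] at hs
    obtain ⟨k, t, ht, rfl⟩ := ih hs.2
    by_cases ha : a = 1
    · refine ⟨k + 1, t, ht, ?_⟩
      rw [ha, Multiset.replicate_succ, Multiset.cons_add]
    · refine ⟨k, (a - 1) ::ₘ t, ?_, ?_⟩
      · simp only [Multiset.mem_cons, not_or]; exact ⟨by omega, ht⟩
      · rw [Multiset.map_cons, Multiset.add_cons, Nat.sub_add_cancel (by omega)]

theorem count_shift (t : Multiset ℕ) (j : ℕ) : (t.map (· + 1)).count (j + 1) = t.count j :=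
  Multiset.count_map_eq_count' (· + 1) t (add_left_injective 1) j

theorem count_shift_zero (t : Multiset ℕ) : (t.map (· + 1)).count 0 = 0 := by
  rw [Multiset.count_eq_zero]; simp

theorem sum_shift (t : Multiset ℕ) : (t.map (· + 1)).sum = t.sum + t.card := by
  rw [Multiset.sum_map_add]; simp

theorem shift_inj {t t' : Multiset ℕ} (h : t.map (· + 1) = t'.map (· + 1)) : t = t' :=
  Multiset.map_injective (add_left_injective 1) h

def sysG : GSys (Multiset ℕ) where
  P3 s := s.count 0 = 0 ∧ ∀ j, 1 ≤ j → s.count j + s.count (j + 1) ≤ 2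
  P2 s := (s.count 0 = 0 ∧ ∀ j, 1 ≤ j → s.count j + s.count (j + 1) ≤ 2) ∧ s.count 1 ≤ 1
  c s := s.card
  w s := s.sum
  f t := Multiset.replicate 2 1 + (t.map (· + 1)).map (· + 1)
  g t := t.map (· + 1)
  h t := 1 ::ₘ t.map (· + 1)
  e := 0
  p23 s h := h.1
  f3 := by
    rintro t ⟨h0, h⟩
    refine ⟨by rw [Multiset.count_add, count_shift_zero]; simp [Multiset.count_replicate], ?_⟩
    intro j hj
    obtain ⟨j, rfl⟩ := Nat.exists_eq_add_of_le' hj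
    simp only [Multiset.count_add, count_shift, Multiset.count_replicate]
    rcases j with _ | _ | j
    · simp [count_shift_zero, h0]
    · simp only [count_shift]
      have := h 1 le_rfl
      simp [h0]; omega
    · simp only [count_shift]
      have := h (j + 1) (by omega)
      simp; omega
  f2 := by
    rintro t ⟨h0, h⟩ ⟨-, h1⟩
    simp [Multiset.count_replicate] at h1
  g2 := by
    rintro t ⟨h0, h⟩
    refine ⟨⟨count_shift_zero t, ?_⟩, by rw [count_shift t 0]; omega⟩
    intro j hj
    obtain ⟨j, rfl⟩ := Nat.exists_eq_add_of_le' hj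
    simp only [count_shift]
    rcases j with _ | j
    · have := h 1 le_rfl
      simp [h0]; omega
    · exact h _ (by omega)
  h2 := by
    rintro t ⟨⟨h0, h⟩, h1⟩
    refine ⟨⟨by rw [Multiset.count_cons, count_shift_zero]; simp, ?_⟩,
      by rw [Multiset.count_cons, count_shift t 0]; simp [h0]⟩
    intro j hj
    obtain ⟨j, rfl⟩ := Nat.exists_eq_add_of_le' hj
    simp only [count_shift, Multiset.count_cons]
    rcases j with _ | j
    · simp [h0]; omega
    · have := h (j + 1) (by omega)
      simp; omega
  dec3 := by
    rintro s ⟨h0, h⟩ h2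
    have h1 : 2 ≤ s.count 1 := by
      by_contra hc
      exact h2 ⟨⟨h0, h⟩, by omega⟩
    obtain ⟨k, t, ht, rfl⟩ := ms_decomp s (Multiset.count_eq_zero.1 h0)
    have ht0 := Multiset.count_eq_zero.2 ht
    have e1 := h 1 le_rfl
    simp only [Multiset.count_add, count_shift t 1, count_shift t 0,
      Multiset.count_replicate] at h1 e1
    simp [ht0] at h1 e1
    obtain ⟨k', t, ht', rfl⟩ := ms_decomp t ht
    have ht0' := Multiset.count_eq_zero.2 ht'
    simp only [Multiset.count_add, count_shift t 0, Multiset.count_replicate] at e1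
    simp [ht0'] at e1
    obtain rfl : k = 2 := by omega
    obtain rfl : k' = 0 := by omega
    simp only [Multiset.replicate_zero, zero_add] at *
    refine ⟨t, ⟨ht0', ?_⟩, rfl⟩
    intro j hj
    have := h (j + 2) (by omega)
    simp only [Multiset.count_add, count_shift, Multiset.count_replicate,
      show j + 2 + 1 = j + 1 + 1 + 1 from rfl, show j + 2 = j + 1 + 1 from rfl] at this
    omega
  dec2 := by
    rintro s ⟨⟨h0, h⟩, h1⟩ -
    obtain ⟨k, t, ht, rfl⟩ := ms_decomp s (Multiset.count_eq_zero.1 h0)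
    have ht0 := Multiset.count_eq_zero.2 ht
    have e1 := h 1 le_rfl
    simp only [Multiset.count_add, count_shift t 1, count_shift t 0,
      Multiset.count_replicate] at h1 e1
    simp [ht0] at h1 e1
    have h' : ∀ j, 1 ≤ j → t.count j + t.count (j + 1) ≤ 2 := by
      intro j hj
      have := h (j + 1) (by omega)
      simp only [Multiset.count_add, count_shift] at this
      omega
    rcases Nat.le_one_iff_eq_zero_or_eq_one.1 h1 with rfl | rfl
    · left; exact ⟨t, ⟨ht0, h'⟩, by simp⟩
    · right; exact ⟨t, ⟨⟨ht0, h'⟩, by omega⟩, by simp⟩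
  gh := by
    rintro t t' ⟨h0, -⟩ - hh
    have := congrArg (Multiset.count 1) hh
    rw [count_shift t 0, Multiset.count_cons] at this
    simp [h0] at this
  cf t := by
    simp only [Multiset.card_add, Multiset.card_replicate, Multiset.card_map]; omega
  cg t := by simp
  ch t := by simp
  wf t _ := by
    rw [Multiset.sum_add, sum_shift, sum_shift]; simp; omega
  wg t _ := sum_shift t
  wh t _ := by rw [Multiset.sum_cons, sum_shift]; omega
  finj t t' _ _ hh := shift_inj (shift_inj (add_left_cancel hh))
  ginj t t' _ _ hh := shift_inj hh
  hinj t t' _ _ hh := shift_inj ((Multiset.cons_inj_right 1).1 hh)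
  pe := by simp
  ce := by simp
  we := by simp
  eu s _ h := Multiset.card_eq_zero.1 h

def A3P (x : ℕ × Multiset ℕ × Multiset ℕ) : Prop :=
  (∀ y ∈ x.2.1, 1 ≤ y ∧ y ≤ x.1) ∧ (∀ d, x.2.2.count d ≤ 1) ∧ x.2.2.count 0 = 0

def sysA : GSys (ℕ × Multiset ℕ × Multiset ℕ) where
  P3 := A3P
  P2 x := A3P x ∧ (x.1 = 0 ∨ x.1 ∈ x.2.1)
  c x := 2 * x.1 + x.2.2.card
  w x := 2 * x.1 ^ 2 + 2 * x.2.1.sum + x.2.2.sum + 2 * x.1 * x.2.2.card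
  f x := (x.1 + 1, x.2.1, x.2.2)
  g x := (x.1, (if x.1 = 0 then x.2.1 else x.1 ::ₘ x.2.1), x.2.2.map (· + 1))
  h x := (x.1, x.2.1, 1 ::ₘ x.2.2.map (· + 1))
  e := (0, 0, 0)
  p23 s h := h.1
  f3 := by
    rintro ⟨j, E, D⟩ ⟨h1, h2, h3⟩
    exact ⟨fun y hy => ⟨(h1 y hy).1, (h1 y hy).2.trans (Nat.le_succ _)⟩, h2, h3⟩
  f2 := by
    rintro ⟨j, E, D⟩ ⟨h1, h2, h3⟩ ⟨-, h | h⟩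
    · simp at h
    · have := (h1 _ h).2
      simp at this
  g2 := by
    rintro ⟨j, E, D⟩ ⟨h1, h2, h3⟩
    refine ⟨⟨?_, ?_, count_shift_zero D⟩, ?_⟩
    · intro y hy
      dsimp only at hy h1 ⊢
      split_ifs at hy with hj
      · exact h1 y hy
      · rcases Multiset.mem_cons.1 hy with rfl | hy
        · omega
        · exact h1 y hy
    · rintro (_ | d)
      · exact (count_shift_zero D).le.trans (by omega)
      · exact (count_shift D d).le.trans (h2 d)
    · by_cases hj : j = 0 <;> simp [hj]
  h2 := by
    rintro ⟨j, E, D⟩ ⟨⟨h1, h2, h3⟩, h4⟩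
    dsimp only at h1 h2 h3 h4
    refine ⟨⟨h1, ?_, ?_⟩, h4⟩
    · rintro (_ | _ | d)
      · simp [Multiset.count_cons]
      · dsimp only
        rw [Multiset.count_cons, count_shift]; simp [h3]
      · dsimp only
        rw [Multiset.count_cons, count_shift]; simpa using h2 (d + 1)
    · simp [Multiset.count_cons]
  dec3 := by
    rintro ⟨j, E, D⟩ ⟨h1, h2, h3⟩ h4
    have h5 : j ≠ 0 ∧ j ∉ E := by
      rw [← not_or]; exact fun h => h4 ⟨⟨h1, h2, h3⟩, h⟩
    obtain ⟨j, rfl⟩ := Nat.exists_eq_succ_of_ne_zero h5.1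
    refine ⟨(j, E, D), ⟨fun y hy => ?_, h2, h3⟩, rfl⟩
    have := h1 y hy
    have h6 : y ≠ j + 1 := by rintro rfl; exact h5.2 hy
    dsimp only at this ⊢
    omega
  dec2 := by
    rintro ⟨j, E, D⟩ ⟨⟨h1, h2, h3⟩, h4⟩ -
    dsimp only at h1 h2 h3 h4
    obtain ⟨k, D, hD, rfl⟩ := ms_decomp D (Multiset.count_eq_zero.1 h3)
    have hD0 := Multiset.count_eq_zero.2 hD
    have hk := h2 1
    rw [Multiset.count_add, count_shift D 0] at hk
    simp [hD0] at hk
    have h2' : ∀ d, D.count d ≤ 1 := by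
      intro d
      have := h2 (d + 1)
      rw [Multiset.count_add, count_shift] at this
      omega
    rcases Nat.le_one_iff_eq_zero_or_eq_one.1 hk with rfl | rfl
    · left
      by_cases hj : j = 0
      · exact ⟨(j, E, D), ⟨h1, h2', hD0⟩, by simp [hj]⟩
      · have hE : j ∈ E := by tauto
        refine ⟨(j, E.erase j, D), ⟨fun y hy => h1 y (Multiset.mem_of_mem_erase hy), h2', hD0⟩, ?_⟩
        simp [hj, Multiset.cons_erase hE]
    · right
      exact ⟨(j, E, D), ⟨⟨h1, h2', hD0⟩, h4⟩, by simp⟩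
  gh := by
    rintro ⟨j, E, D⟩ ⟨j', E', D'⟩ ⟨-, -, h0⟩ - hh
    have := congrArg (fun x => Multiset.count 1 x.2.2) hh
    dsimp only at this h0
    rw [count_shift D 0, Multiset.count_cons] at this
    simp [h0] at this
  cf t := by simp; omega
  cg t := by simp
  ch t := by simp; omega
  wf := by
    rintro ⟨j, E, D⟩ -
    dsimp only
    ring
  wg := by
    rintro ⟨j, E, D⟩ ⟨h1, -, -⟩
    dsimp only
    rw [sum_shift, Multiset.card_map]
    split_ifs with hj
    · subst hj; ring
    · rw [Multiset.sum_cons]; ring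
  wh := by
    rintro ⟨j, E, D⟩ -
    dsimp only
    rw [Multiset.sum_cons, sum_shift, Multiset.card_cons, Multiset.card_map]
    ring
  finj := by
    rintro ⟨j, E, D⟩ ⟨j', E', D'⟩ - - hh
    simpa using hh
  ginj := by
    rintro ⟨j, E, D⟩ ⟨j', E', D'⟩ - - hh
    simp only [Prod.mk.injEq] at hh
    obtain ⟨rfl, h1, h2⟩ := hh
    rw [shift_inj h2]
    split_ifs at h1 with hj
    · rw [h1]
    · rw [(Multiset.cons_inj_right _).1 h1]
  hinj := by
    rintro ⟨j, E, D⟩ ⟨j', E', D'⟩ - - hh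
    simp only [Prod.mk.injEq] at hh
    obtain ⟨rfl, rfl, h2⟩ := hh
    rw [shift_inj ((Multiset.cons_inj_right 1).1 h2)]
  pe := by simp [A3P]
  ce := by simp
  we := by simp
  eu := by
    rintro ⟨j, E, D⟩ ⟨⟨h1, -, -⟩, -⟩ h
    simp only [Nat.add_eq_zero_iff, mul_eq_zero, Multiset.card_eq_zero] at h
    obtain ⟨h, rfl⟩ := h
    obtain rfl : j = 0 := by tauto
    have : E = 0 := Multiset.eq_zero_of_forall_notMem fun y hy => by
      have := h1 y hy
      dsimp only at this
      omega
    rw [this]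

/-- Odd numbers `1, 3, ..., 2j-1`, each once. -/
def oddsM (j : ℕ) : Multiset ℕ := (Multiset.range j).map (fun i => 2 * i + 1)

theorem oddsM_sum (j : ℕ) : (oddsM j).sum = j ^ 2 := by
  induction j with
  | zero => simp [oddsM]
  | succ j ih =>
    rw [oddsM] at ih ⊢
    rw [Multiset.range_succ, Multiset.map_cons, Multiset.sum_cons, ih]
    ring

theorem oddsM_count (j p : ℕ) : (oddsM j).count p = if Odd p ∧ p < 2 * j then 1 else 0 := by
  have hinj : Function.Injective (fun i : ℕ => 2 * i + 1) := fun a b h => by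
    simp only at h; omega
  have hnd : (oddsM j).Nodup := (Multiset.nodup_range j).map hinj
  rw [Multiset.count_eq_of_nodup hnd]
  congr 1
  simp only [oddsM, Multiset.mem_map, Multiset.mem_range, eq_iff_iff]
  constructor
  · rintro ⟨i, hi, rfl⟩; exact ⟨⟨i, rfl⟩, by omega⟩
  · rintro ⟨⟨i, rfl⟩, h⟩; exact ⟨i, by omega, rfl⟩

/-- The partition encoded by a triple. -/
def encA (x : ℕ × Multiset ℕ × Multiset ℕ) : Multiset ℕ :=
  oddsM x.1 + oddsM x.1 + x.2.1.map (fun e => 2 * e) + x.2.2.map (fun d => d + 2 * x.1)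

theorem encA_sum (x : ℕ × Multiset ℕ × Multiset ℕ) : (encA x).sum = sysA.w x := by
  obtain ⟨j, E, D⟩ := x
  have hE : (E.map (fun e => 2 * e)).sum = 2 * E.sum := by
    rw [Multiset.sum_map_mul_left, Multiset.map_id']
  simp only [encA, sysA, Multiset.sum_add, oddsM_sum, hE,
    Multiset.sum_map_add, Multiset.map_id', Multiset.map_const', Multiset.sum_replicate, smul_eq_mul]
  ring

theorem encA_count_odd {j : ℕ} {E D : Multiset ℕ} (h : A3P (j, E, D)) (o : ℕ) (ho : Odd o)
    (hj : o < 2 * j) : (encA (j, E, D)).count o = 2 := by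
  simp only [encA, Multiset.count_add, oddsM_count, ho, hj, and_self, if_true]
  rw [Multiset.count_eq_zero.2, Multiset.count_eq_zero.2]
  · simp; intros; omega
  · simp only [Multiset.mem_map, not_exists, not_and]
    rintro e - rfl
    exact (Nat.not_odd_iff_even.2 (even_two_mul e)) ho

theorem encA_count_even {j : ℕ} {E D : Multiset ℕ} (h : A3P (j, E, D)) (e : ℕ)
    (hj : e ≤ j) : (encA (j, E, D)).count (2 * e) = E.count e := by
  have : ¬ Odd (2 * e) := by simp
  simp only [encA, Multiset.count_add, oddsM_count, this, false_and, if_false]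
  rw [Multiset.count_map_eq_count' (fun e => 2 * e) E (fun a b h => by simp only at h; omega) e,
    (Multiset.count_eq_zero (s := D.map (fun d => d + 2 * j))).2]
  · simp
  · simp only [Multiset.mem_map, not_exists, not_and]
    intro d hd hh
    have h0 : d ≠ 0 := by rintro rfl; exact Multiset.count_eq_zero.1 h.2.2 hd
    omega

theorem encA_count_big {j : ℕ} {E D : Multiset ℕ} (h : A3P (j, E, D)) (d : ℕ) (hd : d ≠ 0) :
    (encA (j, E, D)).count (d + 2 * j) = D.count d := by
  have : ¬ (d + 2 * j < 2 * j) := by omega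
  simp only [encA, Multiset.count_add, oddsM_count, this, and_false, if_false]
  rw [Multiset.count_map_eq_count' (fun d => d + 2 * j) D (add_left_injective _) d,
    Multiset.count_eq_zero.2]
  · simp
  · simp only [Multiset.mem_map, not_exists, not_and]
    intro e he hh
    have := h.1 e he
    dsimp only at this
    omega

theorem encA_zero {x : ℕ × Multiset ℕ × Multiset ℕ} (h : A3P x) : 0 ∉ encA x := by
  obtain ⟨j, E, D⟩ := x
  rw [← Multiset.count_eq_zero, encA_count_even h 0 (Nat.zero_le _), Multiset.count_eq_zero]
  intro h0
  have := h.1 0 h0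
  omega

theorem encA_inj {x y : ℕ × Multiset ℕ × Multiset ℕ} (hx : A3P x) (hy : A3P y)
    (h : encA x = encA y) : x = y := by
  have key : ∀ x y : ℕ × Multiset ℕ × Multiset ℕ, A3P x → A3P y → encA x = encA y →
      ¬ x.1 < y.1 := by
    rintro ⟨j, E, D⟩ ⟨j', E', D'⟩ hx hy h hlt
    dsimp only at hlt
    have h1 := encA_count_big hx 1 one_ne_zero
    rw [h, encA_count_odd hy _ ⟨j, by ring⟩ (by omega)] at h1
    have := hx.2.1 1
    dsimp only at this
    omega
  have h1 := key x y hx hy h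
  have h2 := key y x hy hx h.symm
  obtain ⟨j, E, D⟩ := x
  obtain ⟨j', E', D'⟩ := y
  obtain rfl : j = j' := by dsimp only at h1 h2; omega
  have hE : E = E' := by
    ext e
    by_cases he : e ≤ j
    · rw [← encA_count_even hx e he, h, encA_count_even hy e he]
    · rw [Multiset.count_eq_zero.2 fun hm => he (hx.1 e hm).2,
        Multiset.count_eq_zero.2 fun hm => he (hy.1 e hm).2]
  have hD : D = D' := by
    ext d
    by_cases hd : d = 0
    · subst hd; exact hx.2.2.trans hy.2.2.symm
    · rw [← encA_count_big hx d hd, h, encA_count_big hy d hd]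
  rw [hE, hD]

theorem encA_surj (s : Multiset ℕ) (hs : 0 ∉ s) (j : ℕ)
    (h1 : ∀ o, Odd o → o < 2 * j → s.count o = 2)
    (h3 : ∀ p, 2 * j < p → s.count p ≤ 1) : ∃ x, A3P x ∧ encA x = s := by
  classical
  set E : Multiset ℕ := ∑ e ∈ Finset.range (j + 1), Multiset.replicate (s.count (2 * e)) e with hE
  set D : Multiset ℕ := (s.filter (fun p => 2 * j < p)).map (fun p => p - 2 * j) with hD
  have cE : ∀ e, E.count e = if e ≤ j then s.count (2 * e) else 0 := by
    intro e
    rw [hE, Multiset.count_sum']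
    simp [Multiset.count_replicate]
  have mD : s.filter (fun p => 2 * j < p) = D.map (fun d => d + 2 * j) := by
    rw [hD, Multiset.map_map]
    conv_lhs => rw [← Multiset.map_id (s.filter (fun p => 2 * j < p))]
    refine Multiset.map_congr rfl fun p hp => ?_
    have := (Multiset.mem_filter.1 hp).2
    simp only [id, Function.comp]
    omega
  have cD : ∀ d, D.count d = if d = 0 then 0 else s.count (d + 2 * j) := by
    intro d
    rw [← Multiset.count_map_eq_count' (fun d => d + 2 * j) D (add_left_injective _) d, ← mD,
      Multiset.count_filter]
    by_cases hd : d = 0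
    · simp [hd]
    · simp [hd, Nat.pos_of_ne_zero hd]
  have hx : A3P (j, E, D) := by
    refine ⟨fun y hy => ?_, fun d => ?_, ?_⟩
    · have := Multiset.count_pos.2 hy
      dsimp only at this ⊢
      rw [cE] at this
      split_ifs at this with hle
      · refine ⟨?_, hle⟩
        rcases Nat.eq_zero_or_pos y with rfl | hp
        · rw [mul_zero, Multiset.count_eq_zero.2 hs] at this; omega
        · exact hp
      · omega
    · dsimp only
      rw [cD]
      split_ifs with hd
      · omega
      · exact h3 _ (by omega)
    · dsimp only
      rw [cD, if_pos rfl]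
  refine ⟨_, hx, ?_⟩
  ext p
  by_cases hp : 2 * j < p
  · obtain ⟨d, rfl⟩ := Nat.exists_eq_add_of_le' hp.le
    have hd : d ≠ 0 := by omega
    rw [encA_count_big hx d hd, cD, if_neg hd]
  · rcases Nat.even_or_odd' p with ⟨e, rfl | rfl⟩
    · rw [encA_count_even hx e (by omega), cE, if_pos (by omega)]
    · rw [encA_count_odd hx _ ⟨e, rfl⟩ (by omega), h1 _ ⟨e, rfl⟩ (by omega)]

theorem card_G (n : ℕ) : Nat.card {π : n.Partition //
        ∀ j, 1 ≤ j → π.parts.count j + π.parts.count (j + 1) ≤ 2} =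
    Nat.card {t // sysG.P3 t ∧ sysG.w t = n} := by
  refine Nat.card_congr ⟨fun π => ⟨π.1.parts, ⟨Multiset.count_eq_zero.2 fun h0 =>
      lt_irrefl _ (π.1.parts_pos h0), π.2⟩, π.1.parts_sum⟩,
    fun t => ⟨⟨t.1, fun {i} hi => Nat.pos_of_ne_zero fun h => ?_, t.2.2⟩, t.2.1.2⟩,
    fun _ => rfl, fun _ => rfl⟩
  subst h
  exact Multiset.count_eq_zero.1 t.2.1.1 hi

theorem card_A (n : ℕ) : Nat.card {t // sysA.P3 t ∧ sysA.w t = n} =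
    Nat.card {π : n.Partition //
        ∃ j : ℕ,
          (∀ o, Odd o → o < 2 * j → π.parts.count o = 2) ∧
          (∀ o, Odd o → 2 * j - 1 < o → π.parts.count o ≤ 1) ∧
          (∀ p, 2 * j < p → π.parts.count p ≤ 1)} := by
  have hbig : ∀ t : ℕ × Multiset ℕ × Multiset ℕ, A3P t → ∀ p, 2 * t.1 < p →
      (encA t).count p ≤ 1 := by
    rintro ⟨j, E, D⟩ ht p hp
    obtain ⟨d, rfl⟩ := Nat.exists_eq_add_of_le' hp.le
    dsimp only at hp ⊢
    rw [encA_count_big ht d (by omega)]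
    exact ht.2.1 d
  refine Nat.card_eq_of_bijective (fun t => ⟨⟨encA t.1, fun {i} hi => Nat.pos_of_ne_zero
    fun h => encA_zero t.2.1 (h ▸ hi), (encA_sum t.1).trans t.2.2⟩, t.1.1,
    fun o ho hj => encA_count_odd t.2.1 o ho hj, fun o ho hj => hbig t.1 t.2.1 o ?_,
    hbig t.1 t.2.1⟩) ⟨?_, ?_⟩
  · obtain ⟨i, rfl⟩ := ho
    omega
  · intro t t' h
    simp only [Subtype.mk.injEq, Nat.Partition.mk.injEq] at h
    exact Subtype.ext (encA_inj t.2.1 t'.2.1 h)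
  · rintro ⟨π, j, h1, -, h3⟩
    obtain ⟨x, hx, he⟩ := encA_surj π.parts (fun h0 => lt_irrefl _ (π.parts_pos h0)) j h1 h3
    refine ⟨⟨x, hx, ?_⟩, ?_⟩
    · rw [← encA_sum, he, π.parts_sum]
    · exact Subtype.ext (Nat.Partition.ext he)

/-- The bijection `f̄ : 𝒢₃ → 𝒜₃`: the number of partitions of `n` counted by Gordon's
`G_{3,3}(n)` (`j` and `j+1` together appear at most twice for every `j ≥ 1`) equals the number
counted by `A₃(n)` (there exists `j ≥ 0` such that each odd integer `1, 3, …, 2j-1` appears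
exactly twice, no odd integer greater than `2j-1` is repeated, and no part greater than `2j`
appears more than once). -/
theorem G33_eq_A3 (n : ℕ) :
    Nat.card {π : n.Partition //
        ∀ j, 1 ≤ j → π.parts.count j + π.parts.count (j + 1) ≤ 2} =
      Nat.card {π : n.Partition //
        ∃ j : ℕ,
          (∀ o, Odd o → o < 2 * j → π.parts.count o = 2) ∧
          (∀ o, Odd o → 2 * j - 1 < o → π.parts.count o ≤ 1) ∧
          (∀ p, 2 * j < p → π.parts.count p ≤ 1)} := by
  rw [card_G, GSys.card_eq sysG sysA, card_A]
end

section
/- For every natural number n, the number of partitions of n into parts greater than 1, in which no two consecutive integers both appear as parts and no part appears more than twice, equals the number of partitions of n such that, with 2j the largest repeated part, every positive even integer less than 2j appears at least twice, no odd part less than 2j+2 appears, each odd part appears at most once, no part greater than 2j is repeated, and no two consecutive integers both appear as parts. -/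
open Cardinal

/-- Shift every element above `t` by `k`. -/
def shiftAbove (t k x : ℕ) : ℕ := if t < x then x + k else x

lemma shiftAbove_inj (t k : ℕ) : Function.Injective (shiftAbove t k) := by
  intro x y h
  unfold shiftAbove at h
  split_ifs at h <;> omega

lemma shiftAbove_gt (t k x : ℕ) : t < shiftAbove t k x ↔ t < x := by
  unfold shiftAbove
  split_ifs <;> omega

lemma count_shift_s14 (t k y : ℕ) (m : Multiset ℕ) :
    (m.map (shiftAbove t k)).count y =
      if y ≤ t then m.count y else if y ≤ t + k then 0 else m.count (y - k) := by
  split_ifs with h1 h2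
  · have : shiftAbove t k y = y := by simp [shiftAbove]; omega
    conv_lhs => rw [← this]
    exact Multiset.count_map_eq_count' _ _ (shiftAbove_inj t k) y
  · rw [Multiset.count_eq_zero, Multiset.mem_map]
    rintro ⟨x, -, hx⟩
    unfold shiftAbove at hx
    split_ifs at hx <;> omega
  · have : shiftAbove t k (y - k) = y := by unfold shiftAbove; split_ifs <;> omega
    conv_lhs => rw [← this]
    exact Multiset.count_map_eq_count' _ _ (shiftAbove_inj t k) _

/-- Multiplicity, as a separate constant so that `simp` leaves it alone. -/
def cnt (m : Multiset ℕ) (x : ℕ) : ℕ := m.count x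

lemma cnt_shift (t k y : ℕ) (m : Multiset ℕ) :
    cnt (m.map (shiftAbove t k)) y =
      if y ≤ t then cnt m y else if y ≤ t + k then 0 else cnt m (y - k) :=
  count_shift_s14 t k y m

lemma cnt_cons (a y : ℕ) (m : Multiset ℕ) :
    cnt (a ::ₘ m) y = cnt m y + if y = a then 1 else 0 :=
  Multiset.count_cons y a m

lemma cnt_eq_zero (m : Multiset ℕ) (x : ℕ) : cnt m x = 0 ↔ x ∉ m := Multiset.count_eq_zero

lemma cnt_pos (m : Multiset ℕ) (x : ℕ) : 0 < cnt m x ↔ x ∈ m := Multiset.count_pos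

lemma exists_cons_of_cnt {m : Multiset ℕ} {x : ℕ} (h : 0 < cnt m x) : ∃ a, m = x ::ₘ a :=
  Multiset.exists_cons_of_mem ((cnt_pos m x).1 h)

lemma sum_shift_s14 (t k : ℕ) (m : Multiset ℕ) :
    (m.map (shiftAbove t k)).sum = m.sum + k * (m.filter (t < ·)).card := by
  induction m using Multiset.induction with
  | empty => simp
  | cons a m ih =>
    by_cases h : t < a
    · simp [ih, h, shiftAbove]; ring
    · simp [ih, h, shiftAbove]; ring

lemma card_filter_shift (t k : ℕ) (m : Multiset ℕ) :
    ((m.map (shiftAbove t k)).filter (t < ·)).card = (m.filter (t < ·)).card := by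
  rw [Multiset.filter_map, Multiset.card_map]
  congr 2
  funext x
  simp [shiftAbove_gt]

lemma card_filter_shift2 (t k : ℕ) (m : Multiset ℕ) :
    ((m.map (shiftAbove t k)).filter (t + k < ·)).card = (m.filter (t < ·)).card := by
  rw [Multiset.filter_map, Multiset.card_map]
  congr 2
  funext x
  simp only [shiftAbove, Function.comp_apply, eq_iff_iff]
  split_ifs <;> omega

lemma exists_shift (t k : ℕ) (m : Multiset ℕ) (h : ∀ y, t < y → y ≤ t + k → cnt m y = 0) :
    ∃ m' : Multiset ℕ, m'.map (shiftAbove t k) = m := by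
  refine ⟨m.map (fun y => if t < y then y - k else y), ?_⟩
  rw [Multiset.map_map]
  conv_rhs => rw [← Multiset.map_id m]
  apply Multiset.map_congr rfl
  intro y hy
  have h1 := h y
  rw [cnt_eq_zero] at h1
  simp only [shiftAbove, Function.comp_apply, id]
  by_cases h2 : t < y
  · have : ¬ y ≤ t + k := fun h3 => h1 h2 h3 hy
    simp only [h2, if_true]
    split_ifs <;> omega
  · simp [h2]

lemma toFinset_card_shift (t k : ℕ) (m : Multiset ℕ) :
    (m.map (shiftAbove t k)).toFinset.card = m.toFinset.card := by
  rw [Multiset.toFinset_map, Finset.card_image_of_injective _ (shiftAbove_inj t k)]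

/-- first family -/
def BSet (j r : ℕ) (n : ℤ) : Set (Multiset ℕ) :=
  {m | cnt m 0 = 0 ∧ cnt m 1 = 0 ∧ (∀ x, cnt m x = 0 ∨ cnt m (x + 1) = 0) ∧
    (∀ x, cnt m x ≤ 2) ∧ m.card = 2 * j + r ∧ m.toFinset.card = j + r ∧ (m.sum : ℤ) = n}

/-- second family -/
def TSet (j r : ℕ) (n : ℤ) : Set (Multiset ℕ) :=
  {m | cnt m 0 = 0 ∧ (∀ i, 1 ≤ i → i ≤ j → 2 ≤ cnt m (2 * i)) ∧
    (∀ i, i ≤ j → cnt m (2 * i + 1) = 0) ∧ (∀ x, 2 * j < x → cnt m x ≤ 1) ∧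
    (∀ x, 2 * j < x → cnt m x = 0 ∨ cnt m (x + 1) = 0) ∧
    (m.filter (2 * j < ·)).card = r ∧ (m.sum : ℤ) = n}

lemma mk_branch (X Y : Set (Multiset ℕ)) (P : Multiset ℕ → Prop) (F : Multiset ℕ → Multiset ℕ)
    (hF : Function.Injective F) (h1 : ∀ m, F m ∈ X ∧ P (F m) ↔ m ∈ Y)
    (h2 : ∀ m ∈ X, P m → ∃ m', F m' = m) : #{m | m ∈ X ∧ P m} = #Y := by
  rw [← Cardinal.mk_image_eq (s := Y) hF]
  congr 2
  ext m
  constructor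
  · rintro ⟨hm, hp⟩
    obtain ⟨m', rfl⟩ := h2 m hm hp
    exact ⟨m', (h1 m').1 ⟨hm, hp⟩, rfl⟩
  · rintro ⟨m', hm', rfl⟩
    exact (h1 m').2 hm'

lemma mk_split (X : Set (Multiset ℕ)) (P : Multiset ℕ → Prop) :
    #X = #{m | m ∈ X ∧ P m} + #{m | m ∈ X ∧ ¬ P m} := by
  rw [← Cardinal.mk_union_of_disjoint]
  · congr 2
    ext m
    simp only [Set.mem_union, Set.mem_ofPred_eq]
    tauto
  · rw [Set.disjoint_left]
    rintro m ⟨-, h⟩ ⟨-, h'⟩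
    exact h' h

lemma map_shift_inj (t k : ℕ) : Function.Injective (Multiset.map (shiftAbove t k)) :=
  Multiset.map_injective (shiftAbove_inj t k)

lemma filter_B {m : Multiset ℕ} (h0 : cnt m 0 = 0) (h1 : cnt m 1 = 0) :
    m.filter (1 < ·) = m := by
  rw [Multiset.filter_eq_self]
  intro a ha
  rw [cnt_eq_zero] at h0 h1
  by_contra h
  have : a = 0 ∨ a = 1 := by omega
  rcases this with rfl | rfl <;> contradiction

lemma B_a (j r : ℕ) (n : ℤ) :
    #{m | m ∈ BSet j r n ∧ cnt m 2 = 0} = #(BSet j r (n - (2 * j + r))) := by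
  apply mk_branch _ _ _ (Multiset.map (shiftAbove 1 1)) (map_shift_inj 1 1)
  · intro m
    simp only [BSet, Set.mem_ofPred_eq, cnt_shift, sum_shift_s14, Multiset.card_map,
      toFinset_card_shift]
    constructor
    · rintro ⟨⟨h0, h1, h2, h3, h4, h5, h6⟩, h7⟩
      simp at h0 h1
      rw [filter_B h0 h1, h4] at h6
      refine ⟨h0, h1, ?_, ?_, h4, h5, by omega⟩
      · intro x
        have := h2 (x + 1)
        grind
      · intro x
        have := h3 (x + 1)
        grind
    · rintro ⟨h0, h1, h2, h3, h4, h5, h6⟩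
      rw [filter_B h0 h1, h4]
      refine ⟨⟨by simpa, by simpa, ?_, ?_, rfl, h5, by omega⟩, by simp⟩
      · intro x
        have := h2 (x - 1)
        grind
      · intro x
        have := h3 (x - 1)
        grind
  · intro m hm h2
    apply exists_shift
    intro y h3 h4
    obtain rfl : y = 2 := by omega
    exact h2

lemma B_b (j r : ℕ) (n : ℤ) :
    #{m | m ∈ BSet j (r + 1) n ∧ cnt m 2 = 1} = #(BSet j r (n - (4 * j + 2 * (r + 1)))) := by
  apply mk_branch _ _ _ (fun m => 2 ::ₘ Multiset.map (shiftAbove 1 2) m)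
    (fun a b h => map_shift_inj 1 2 ((Multiset.cons_inj_right _).1 h))
  · intro m
    have hmem : 2 ∉ (Multiset.map (shiftAbove 1 2) m).toFinset := by
      rw [Multiset.mem_toFinset, ← cnt_eq_zero, cnt_shift]; simp
    simp only [BSet, Set.mem_ofPred_eq, cnt_cons, cnt_shift, sum_shift_s14,
      Multiset.sum_cons, Multiset.card_cons, Multiset.toFinset_cons, Multiset.card_map,
      toFinset_card_shift, Finset.card_insert_of_notMem hmem]
    constructor
    · rintro ⟨⟨h0, h1, h2, h3, h4, h5, h6⟩, h7⟩
      simp at h0 h1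
      have h4' : m.card = 2 * j + r := by omega
      rw [filter_B h0 h1, h4'] at h6
      refine ⟨h0, h1, ?_, ?_, h4', by omega, by omega⟩
      · intro x
        have := h2 (x + 2)
        grind
      · intro x
        have := h3 (x + 2)
        grind
    · rintro ⟨h0, h1, h2, h3, h4, h5, h6⟩
      rw [filter_B h0 h1, h4]
      refine ⟨⟨by simpa, by simpa, ?_, ?_, by omega, by omega, by omega⟩, by simp⟩
      · intro x
        have := h2 (x - 2)
        grind
      · intro x
        have := h3 (x - 2)
        grind
  · intro m hm h2
    obtain ⟨a, rfl⟩ := exists_cons_of_cnt (m := m) (x := 2) (by omega)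
    obtain ⟨h0, h1, h3, -⟩ := hm
    have h23 := h3 2
    simp [cnt_cons] at h2 h23
    obtain ⟨m', hm'⟩ := exists_shift 1 2 a (by
      intro y h3 h4
      have : y = 2 ∨ y = 3 := by omega
      rcases this with rfl | rfl <;> assumption)
    exact ⟨m', by simp [hm']⟩

lemma B_c (j r : ℕ) (n : ℤ) :
    #{m | m ∈ BSet (j + 1) r n ∧ cnt m 2 = 2} = #(BSet j r (n - (4 * (j + 1) + 2 * r))) := by
  apply mk_branch _ _ _ (fun m => 2 ::ₘ 2 ::ₘ Multiset.map (shiftAbove 1 2) m)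
    (fun a b h => map_shift_inj 1 2 ((Multiset.cons_inj_right _).1 ((Multiset.cons_inj_right _).1 h)))
  · intro m
    have hmem : 2 ∉ (Multiset.map (shiftAbove 1 2) m).toFinset := by
      rw [Multiset.mem_toFinset, ← cnt_eq_zero, cnt_shift]; simp
    simp only [BSet, Set.mem_ofPred_eq, cnt_cons, cnt_shift, sum_shift_s14,
      Multiset.sum_cons, Multiset.card_cons, Multiset.toFinset_cons, Multiset.card_map,
      toFinset_card_shift, Finset.insert_idem, Finset.card_insert_of_notMem hmem]
    constructor
    · rintro ⟨⟨h0, h1, h2, h3, h4, h5, h6⟩, h7⟩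
      simp at h0 h1
      have h4' : m.card = 2 * j + r := by omega
      rw [filter_B h0 h1, h4'] at h6
      refine ⟨h0, h1, ?_, ?_, h4', by omega, by omega⟩
      · intro x
        have := h2 (x + 2)
        grind
      · intro x
        have := h3 (x + 2)
        grind
    · rintro ⟨h0, h1, h2, h3, h4, h5, h6⟩
      rw [filter_B h0 h1, h4]
      refine ⟨⟨by simpa, by simpa, ?_, ?_, by omega, by omega, by omega⟩, by simp⟩
      · intro x
        have := h2 (x - 2)
        grind
      · intro x
        have := h3 (x - 2)
        grind
  · intro m hm h2
    obtain ⟨a, rfl⟩ := exists_cons_of_cnt (m := m) (x := 2) (by omega)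
    simp [cnt_cons] at h2
    obtain ⟨b, rfl⟩ := exists_cons_of_cnt (m := a) (x := 2) (by omega)
    obtain ⟨h0, h1, h3, -⟩ := hm
    have h23 := h3 2
    simp [cnt_cons] at h2 h23
    obtain ⟨m', hm'⟩ := exists_shift 1 2 b (by
      intro y h3 h4
      have : y = 2 ∨ y = 3 := by omega
      rcases this with rfl | rfl <;> assumption)
    exact ⟨m', by simp [hm']⟩

lemma card_le_two_mul {m : Multiset ℕ} (h : ∀ x, cnt m x ≤ 2) :
    m.card ≤ 2 * m.toFinset.card := by
  rw [← Multiset.toFinset_sum_count_eq m, mul_comm]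
  exact Finset.sum_le_card_nsmul _ _ _ (fun x _ => h x)

lemma B_b0 (j : ℕ) (n : ℤ) : #{m | m ∈ BSet j 0 n ∧ cnt m 2 = 1} = 0 := by
  rw [Cardinal.mk_set_eq_zero_iff, Set.eq_empty_iff_forall_notMem]
  rintro m ⟨⟨h0, h1, h2, h3, h4, h5, h6⟩, h7⟩
  obtain ⟨a, rfl⟩ := exists_cons_of_cnt (m := m) (x := 2) (by omega)
  have h8 : 2 ∉ a := by
    rw [← cnt_eq_zero]
    simpa [cnt_cons] using h7
  have h9 := card_le_two_mul (m := a) (fun x => le_trans (Multiset.count_le_count_cons _ _ _) (h3 x))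
  rw [Multiset.toFinset_cons, Finset.card_insert_of_notMem (by simpa using h8)] at h5
  rw [Multiset.card_cons] at h4
  omega

lemma B_c0 (r : ℕ) (n : ℤ) : #{m | m ∈ BSet 0 r n ∧ cnt m 2 = 2} = 0 := by
  rw [Cardinal.mk_set_eq_zero_iff, Set.eq_empty_iff_forall_notMem]
  rintro m ⟨⟨h0, h1, h2, h3, h4, h5, h6⟩, h7⟩
  have : m.Nodup := Multiset.toFinset_card_eq_card_iff_nodup.1 (by omega)
  have : cnt m 2 ≤ 1 := Multiset.nodup_iff_count_le_one.1 this 2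
  omega

lemma B_rec (j r : ℕ) (n : ℤ) : #(BSet j r n) = #(BSet j r (n - (2 * j + r))) +
    (#{m | m ∈ BSet j r n ∧ cnt m 2 = 1} + #{m | m ∈ BSet j r n ∧ cnt m 2 = 2}) := by
  rw [mk_split (BSet j r n) (fun m => cnt m 2 = 0), B_a]
  congr 1
  rw [mk_split _ (fun m => cnt m 2 = 1)]
  congr 3
  · ext m
    simp only [Set.mem_ofPred_eq]
    constructor
    · tauto
    · rintro ⟨h, h'⟩
      exact ⟨⟨h, by omega⟩, h'⟩
  · ext m
    simp only [Set.mem_ofPred_eq]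
    constructor
    · rintro ⟨⟨h, h1⟩, h2⟩
      have := h.2.2.2.1 2
      exact ⟨h, by omega⟩
    · rintro ⟨h, h'⟩
      exact ⟨⟨h, by omega⟩, by omega⟩

lemma T_i (j r : ℕ) (n : ℤ) :
    #{m | m ∈ TSet j r n ∧ cnt m (2 * j + 2) = 0} = #(TSet j r (n - r)) := by
  apply mk_branch _ _ _ (Multiset.map (shiftAbove (2 * j) 1)) (map_shift_inj _ _)
  · intro m
    simp only [TSet, Set.mem_ofPred_eq, cnt_shift, sum_shift_s14, card_filter_shift]
    constructor
    · rintro ⟨⟨h0, h1, h2, h3, h4, h5, h6⟩, h7⟩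
      simp at h0
      rw [h5] at h6
      refine ⟨h0, ?_, ?_, ?_, ?_, h5, by omega⟩
      · intro i hi hij
        have := h1 i hi hij
        grind
      · intro i hij
        have := h2 i hij
        grind
      · intro x hx
        have := h3 (x + 1) (by omega)
        grind
      · intro x hx
        have := h4 (x + 1) (by omega)
        grind
    · rintro ⟨h0, h1, h2, h3, h4, h5, h6⟩
      rw [h5]
      have h2j := h2 j le_rfl
      refine ⟨⟨by simpa, ?_, ?_, ?_, ?_, rfl, by omega⟩, by grind⟩
      · intro i hi hij
        have := h1 i hi hij
        grind
      · intro i hij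
        have := h2 i hij
        grind
      · intro x hx
        have := h3 (x - 1)
        grind
      · intro x hx
        have := h4 (x - 1)
        grind
  · intro m hm h2
    apply exists_shift
    intro y h3 h4
    obtain rfl : y = 2 * j + 1 := by omega
    exact hm.2.2.1 j le_rfl

lemma T_ii (j r : ℕ) (n : ℤ) :
    #{m | m ∈ TSet j (r + 1) n ∧ ¬ cnt m (2 * j + 2) = 0} =
      #(TSet j r (n - (2 * j + 2 * (r + 1)))) := by
  apply mk_branch _ _ _ (fun m => (2 * j + 2) ::ₘ Multiset.map (shiftAbove (2 * j) 2) m)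
    (fun a b h => map_shift_inj _ _ ((Multiset.cons_inj_right _).1 h))
  · intro m
    have hlt : 2 * j < 2 * j + 2 := by omega
    simp only [TSet, Set.mem_ofPred_eq, cnt_cons, cnt_shift, sum_shift_s14, Multiset.sum_cons,
      Multiset.filter_cons_of_pos (p := (2 * j < ·)) _ hlt, Multiset.card_cons, card_filter_shift]
    constructor
    · rintro ⟨⟨h0, h1, h2, h3, h4, h5, h6⟩, h7⟩
      simp at h0
      have h5' : (m.filter (2 * j < ·)).card = r := by omega
      rw [h5'] at h6
      refine ⟨h0, ?_, ?_, ?_, ?_, h5', by omega⟩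
      · intro i hi hij
        have := h1 i hi hij
        grind
      · intro i hij
        have := h2 i hij
        have := h4 (2 * j + 2)
        grind
      · intro x hx
        have := h3 (x + 2) (by omega)
        grind
      · intro x hx
        have := h4 (x + 2) (by omega)
        grind
    · rintro ⟨h0, h1, h2, h3, h4, h5, h6⟩
      rw [h5]
      have h2j := h2 j le_rfl
      refine ⟨⟨by simpa, ?_, ?_, ?_, ?_, rfl, by omega⟩, by grind⟩
      · intro i hi hij
        have := h1 i hi hij
        grind
      · intro i hij
        have := h2 i hij
        grind
      · intro x hx
        have := h3 (x - 2)
        grind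
      · intro x hx
        have := h4 (x - 2)
        grind
  · intro m hm h2
    obtain ⟨a, rfl⟩ := exists_cons_of_cnt (m := m) (x := 2 * j + 2) (by omega)
    obtain ⟨h0, h1, h3, h4, -⟩ := hm
    have h5 := h3 j le_rfl
    have h6 := h4 (2 * j + 2) (by omega)
    simp [cnt_cons] at h5 h6
    obtain ⟨m', hm'⟩ := exists_shift (2 * j) 2 a (by
      intro y h3 h4
      have : y = 2 * j + 1 ∨ y = 2 * j + 2 := by omega
      rcases this with rfl | rfl <;> assumption)
    exact ⟨m', by simp [hm']⟩

lemma T_iii (j r : ℕ) (n : ℤ) :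
    #{m | m ∈ TSet (j + 1) r n ∧ 3 ≤ cnt m (2 * j + 2)} = #(TSet (j + 1) r (n - 2 * (j + 1))) := by
  apply mk_branch _ _ _ (fun m => (2 * j + 2) ::ₘ m)
    (fun a b h => ((Multiset.cons_inj_right _).1 h))
  · intro m
    have hlt : ¬ 2 * (j + 1) < 2 * j + 2 := by omega
    simp only [TSet, Set.mem_ofPred_eq, cnt_cons, Multiset.sum_cons,
      Multiset.filter_cons_of_neg (p := (2 * (j + 1) < ·)) _ hlt]
    constructor
    · rintro ⟨⟨h0, h1, h2, h3, h4, h5, h6⟩, h7⟩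
      simp at h0
      refine ⟨h0, ?_, ?_, ?_, ?_, h5, by omega⟩
      · intro i hi hij
        have := h1 i hi hij
        grind
      · intro i hij
        have := h2 i hij
        grind
      · intro x hx
        have := h3 x hx
        grind
      · intro x hx
        have := h4 x hx
        grind
    · rintro ⟨h0, h1, h2, h3, h4, h5, h6⟩
      have h1j := h1 (j + 1) (by omega) le_rfl
      refine ⟨⟨by simpa, ?_, ?_, ?_, ?_, h5, by omega⟩, by grind⟩
      · intro i hi hij
        have := h1 i hi hij
        grind
      · intro i hij
        have := h2 i hij
        grind
      · intro x hx
        have := h3 x hx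
        grind
      · intro x hx
        have := h4 x hx
        grind
  · intro m hm h2
    obtain ⟨a, rfl⟩ := exists_cons_of_cnt (m := m) (x := 2 * j + 2) (by omega)
    exact ⟨a, rfl⟩

lemma T_iv (j r : ℕ) (n : ℤ) :
    #{m | m ∈ TSet (j + 1) r n ∧ ¬ 3 ≤ cnt m (2 * j + 2)} =
      #(TSet j r (n - (4 * (j + 1) + 2 * r))) := by
  apply mk_branch _ _ _
    (fun m => (2 * j + 2) ::ₘ (2 * j + 2) ::ₘ Multiset.map (shiftAbove (2 * j) 2) m)
    (fun a b h => map_shift_inj _ _ ((Multiset.cons_inj_right _).1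
      ((Multiset.cons_inj_right _).1 h)))
  · intro m
    have hlt : ¬ 2 * j + 2 < 2 * j + 2 := by omega
    have hj : 2 * (j + 1) = 2 * j + 2 := by ring
    simp only [TSet, Set.mem_ofPred_eq, hj, cnt_cons, cnt_shift, sum_shift_s14, Multiset.sum_cons,
      Multiset.filter_cons_of_neg (p := (2 * j + 2 < ·)) _ hlt, card_filter_shift2]
    constructor
    · rintro ⟨⟨h0, h1, h2, h3, h4, h5, h6⟩, h7⟩
      simp at h0
      rw [h5] at h6
      refine ⟨h0, ?_, ?_, ?_, ?_, h5, by omega⟩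
      · intro i hi hij
        have := h1 i hi (by omega)
        grind
      · intro i hij
        have := h2 i (by omega)
        have := h2 (j + 1) le_rfl
        grind
      · intro x hx
        have := h3 (x + 2) (by omega)
        grind
      · intro x hx
        have := h4 (x + 2) (by omega)
        grind
    · rintro ⟨h0, h1, h2, h3, h4, h5, h6⟩
      rw [h5]
      have h2j := h2 j le_rfl
      refine ⟨⟨by simpa, ?_, ?_, ?_, ?_, rfl, by omega⟩, by grind⟩
      · intro i hi hij
        have := h1 i hi
        grind
      · intro i hij
        have := h2 i
        grind
      · intro x hx
        have := h3 (x - 2)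
        grind
      · intro x hx
        have := h4 (x - 2)
        grind
  · intro m hm h2
    have h7 := hm.2.1 (j + 1) (by omega) le_rfl
    rw [show 2 * (j + 1) = 2 * j + 2 by ring] at h7
    obtain ⟨a, rfl⟩ := exists_cons_of_cnt (m := m) (x := 2 * j + 2) (by omega)
    simp [cnt_cons] at h2 h7
    obtain ⟨b, rfl⟩ := exists_cons_of_cnt (m := a) (x := 2 * j + 2) (by omega)
    have h5 := hm.2.2.1 j (by omega)
    simp [cnt_cons] at h2 h5
    obtain ⟨m', hm'⟩ := exists_shift (2 * j) 2 b (by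
      intro y h3 h4
      have : y = 2 * j + 1 ∨ y = 2 * j + 2 := by omega
      rcases this with rfl | rfl <;> first | assumption | omega)
    exact ⟨m', by simp [hm']⟩

lemma T_rec_r (j r : ℕ) (n : ℤ) : #(TSet j (r + 1) n) =
    #(TSet j (r + 1) (n - (r + 1))) + #(TSet j r (n - (2 * j + 2 * (r + 1)))) := by
  rw [mk_split (TSet j (r + 1) n) (fun m => cnt m (2 * j + 2) = 0), T_i, T_ii]
  push_cast
  rfl

lemma T_rec_j (j r : ℕ) (n : ℤ) : #(TSet (j + 1) r n) =
    #(TSet (j + 1) r (n - 2 * (j + 1))) + #(TSet j r (n - (4 * (j + 1) + 2 * r))) := by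
  rw [mk_split (TSet (j + 1) r n) (fun m => 3 ≤ cnt m (2 * j + 2)), T_iii, T_iv]

lemma eq_zero_of_cnt {m : Multiset ℕ} (h0 : cnt m 0 = 0)
    (h : (m.filter (0 < ·)).card = 0) : m = 0 := by
  rw [Multiset.card_eq_zero, Multiset.filter_eq_nil] at h
  rw [Multiset.eq_zero_iff_forall_notMem]
  intro a ha
  have := h a ha
  obtain rfl : a = 0 := by omega
  exact (cnt_eq_zero m 0).1 h0 ha

lemma BT_zero (n : ℤ) : BSet 0 0 n = TSet 0 0 n := by
  ext m
  constructor
  · rintro ⟨h0, h1, h2, h3, h4, h5, h6⟩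
    obtain rfl : m = 0 := by simpa using h4
    refine ⟨h0, ?_, ?_, ?_, ?_, by simp, h6⟩ <;> intros <;> first | omega | simp [cnt]
  · rintro ⟨h0, h1, h2, h3, h4, h5, h6⟩
    obtain rfl : m = 0 := eq_zero_of_cnt h0 (by simpa using h5)
    refine ⟨h0, ?_, ?_, ?_, by simp, by simp, h6⟩ <;> intros <;> simp [cnt]

lemma BT_eq (k : ℕ) : ∀ n : ℤ, n < k → ∀ j r, #(BSet j r n) = #(TSet j r n) := by
  induction k with
  | zero =>
    intro n hn j r
    have h1 : BSet j r n = ∅ := by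
      rw [Set.eq_empty_iff_forall_notMem]
      rintro m ⟨-, -, -, -, -, -, h6⟩
      push_cast at hn
      omega
    have h2 : TSet j r n = ∅ := by
      rw [Set.eq_empty_iff_forall_notMem]
      rintro m ⟨-, -, -, -, -, -, h6⟩
      push_cast at hn
      omega
    rw [h1, h2]
  | succ k ih =>
    intro n hn j r
    push_cast at hn
    rcases j with _ | j <;> rcases r with _ | r
    · rw [BT_zero]
    · rw [B_rec, B_c0, B_b, T_rec_r, ih _ (by push_cast; omega), ih _ (by push_cast; omega)]
      push_cast
      simp
    · rw [B_rec, B_b0, B_c, T_rec_j, ih _ (by push_cast; omega), ih _ (by push_cast; omega)]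
      push_cast
      simp
    · rw [B_rec, B_b, B_c, T_rec_j, T_rec_r _ _ (n - _), ih _ (by push_cast; omega),
        ih _ (by push_cast; omega), ih _ (by push_cast; omega)]
      rw [add_assoc]
      push_cast
      congr 4 <;> ring_nf

lemma B_parts (n : ℕ) : Set.image Nat.Partition.parts {π : n.Partition |
        (∀ j ∈ π.parts, 1 < j) ∧
        (∀ j, ¬(j ∈ π.parts ∧ j + 1 ∈ π.parts)) ∧
        (∀ j, π.parts.count j ≤ 2)} = ⋃ p : ℕ × ℕ, BSet p.1 p.2 n := by
  ext m
  simp only [Set.mem_image, Set.mem_iUnion]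
  constructor
  · rintro ⟨π, ⟨h1, h2, h3⟩, rfl⟩
    have h4 := card_le_two_mul h3
    have h5 := Multiset.toFinset_card_le π.parts
    refine ⟨(π.parts.card - π.parts.toFinset.card, 2 * π.parts.toFinset.card - π.parts.card),
      ?_, ?_, ?_, h3, ?_, ?_, ?_⟩
    · rw [cnt_eq_zero]
      intro h
      have := h1 _ h
      omega
    · rw [cnt_eq_zero]
      intro h
      have := h1 _ h
      omega
    · intro x
      rw [cnt_eq_zero, cnt_eq_zero]
      have := h2 x
      tauto
    · simp only
      omega
    · simp only
      omega
    · rw [π.parts_sum]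
  · rintro ⟨⟨j, r⟩, h0, h1, h2, h3, h4, h5, h6⟩
    have hgt : ∀ i ∈ m, 1 < i := by
      intro i hi
      rw [cnt_eq_zero] at h0 h1
      by_contra h
      have : i = 0 ∨ i = 1 := by omega
      rcases this with rfl | rfl <;> contradiction
    refine ⟨⟨m, fun {i} hi => by have := hgt i hi; omega, by exact_mod_cast h6⟩,
      ⟨hgt, ?_, h3⟩, rfl⟩
    intro x
    have := h2 x
    rw [cnt_eq_zero, cnt_eq_zero] at this
    tauto

lemma lrp_le {n : ℕ} (π : n.Partition) {x : ℕ} (h : 2 ≤ cnt π.parts x) :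
    x ≤ largestRepeatedPart π := by
  unfold largestRepeatedPart
  refine Finset.le_sup (f := id) ?_
  rw [Finset.mem_filter, Multiset.mem_toFinset, ← cnt_pos]
  exact ⟨by omega, h⟩

lemma lrp_cnt {n : ℕ} (π : n.Partition) (h : largestRepeatedPart π ≠ 0) :
    2 ≤ cnt π.parts (largestRepeatedPart π) := by
  unfold largestRepeatedPart at h ⊢
  have hne : (π.parts.toFinset.filter (fun j => 2 ≤ π.parts.count j)).Nonempty := by
    rw [Finset.nonempty_iff_ne_empty]
    intro he
    rw [he] at h
    simp at h
  obtain ⟨i, hi, hs⟩ := Finset.exists_mem_eq_sup _ hne id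
  rw [hs]
  exact (Finset.mem_filter.1 hi).2

lemma T_parts (n : ℕ) : Set.image Nat.Partition.parts {π : n.Partition |
        (∀ j, Odd j → π.parts.count j ≤ 1) ∧
        (∀ j, Odd j → j < largestRepeatedPart π + 2 → π.parts.count j = 0) ∧
        (∀ j, Even j → 0 < j → j < largestRepeatedPart π → 2 ≤ π.parts.count j) ∧
        (∀ j, ¬(j ∈ π.parts ∧ j + 1 ∈ π.parts))} = ⋃ p : ℕ × ℕ, TSet p.1 p.2 n := by
  ext m
  simp only [Set.mem_image, Set.mem_iUnion]
  constructor
  · rintro ⟨π, ⟨h1, h2, h3, h4⟩, rfl⟩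
    have hev : ∃ j, largestRepeatedPart π = 2 * j := by
      rcases Nat.even_or_odd (largestRepeatedPart π) with h | h
      · exact h.exists_two_nsmul _ |>.imp (fun a ha => by simpa using ha)
      · have a1 := h1 _ h
        have a2 := lrp_cnt π (fun h0 => by rw [h0] at h; exact absurd h (by decide))
        unfold cnt at a2
        omega
    obtain ⟨j, hj⟩ := hev
    refine ⟨(j, (π.parts.filter (2 * j < ·)).card), ?_, ?_, ?_, ?_, ?_, rfl, ?_⟩
    · rw [cnt_eq_zero]
      intro h
      exact absurd (π.parts_pos h) (by omega)
    · intro i hi hij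
      simp only at hij
      rcases Nat.lt_or_ge i j with h | h
      · exact h3 (2 * i) (even_two_mul i) (by omega) (by omega)
      · obtain rfl : i = j := by omega
        rw [← hj]
        exact lrp_cnt π (by omega)
    · intro i hij
      simp only at hij
      exact h2 (2 * i + 1) (odd_two_mul_add_one i) (by omega)
    · intro x hx
      simp only at hx
      by_contra h
      have := lrp_le π (x := x) (by omega)
      omega
    · intro x _
      rw [cnt_eq_zero, cnt_eq_zero]
      have := h4 x
      tauto
    · rw [π.parts_sum]
  · rintro ⟨⟨j, r⟩, h0, h1, h2, h3, h4, h5, h6⟩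
    simp only at h1 h2 h3 h4 h5
    let π : n.Partition := ⟨m, fun {i} hi => by
      rw [cnt_eq_zero] at h0
      exact Nat.pos_of_ne_zero (fun h => h0 (h ▸ hi)), by exact_mod_cast h6⟩
    have hle : largestRepeatedPart π ≤ 2 * j := by
      by_contra h
      have a1 := lrp_cnt π (by omega)
      have a2 : cnt π.parts (largestRepeatedPart π) ≤ 1 := h3 _ (by omega)
      omega
    have hj : largestRepeatedPart π = 2 * j := by
      apply le_antisymm hle
      rcases Nat.eq_zero_or_pos j with rfl | h
      · omega
      · exact lrp_le π (h1 j h le_rfl)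
    have hodd : ∀ x, Odd x → x < 2 * j + 2 → cnt m x = 0 := by
      rintro x ⟨i, rfl⟩ hx
      exact h2 i (by omega)
    refine ⟨π, ⟨?_, ?_, ?_, ?_⟩, rfl⟩
    · intro x hx
      by_cases h : 2 * j < x
      · exact h3 x h
      · have : cnt m x = 0 := hodd x hx (by omega)
        change cnt m x ≤ 1
        omega
    · rw [hj]
      exact hodd
    · rw [hj]
      rintro x hx hx0 hxj
      obtain ⟨i, rfl⟩ := hx.exists_two_nsmul _
      simp only [smul_eq_mul] at *
      exact h1 i (by omega) (by omega)
    · intro x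
      change ¬(x ∈ m ∧ x + 1 ∈ m)
      by_cases h : 2 * j < x
      · have := h4 x h
        rw [cnt_eq_zero, cnt_eq_zero] at this
        tauto
      · rcases Nat.even_or_odd x with hx | hx
        · have := hodd (x + 1) hx.add_one (by obtain ⟨i, rfl⟩ := hx; omega)
          rw [cnt_eq_zero] at this
          tauto
        · have := hodd x hx (by omega)
          rw [cnt_eq_zero] at this
          tauto

lemma B_disj (n : ℤ) : Pairwise (Function.onFun Disjoint fun p : ℕ × ℕ => BSet p.1 p.2 n) := by
  rintro ⟨j, r⟩ ⟨j', r'⟩ hne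
  rw [Function.onFun, Set.disjoint_left]
  rintro m ⟨-, -, -, -, h4, h5, -⟩ ⟨-, -, -, -, h4', h5', -⟩
  simp only at h4 h5 h4' h5'
  exact hne (by rw [Prod.mk.injEq]; omega)

lemma T_disj (n : ℤ) : Pairwise (Function.onFun Disjoint fun p : ℕ × ℕ => TSet p.1 p.2 n) := by
  rintro ⟨j, r⟩ ⟨j', r'⟩ hne
  rw [Function.onFun, Set.disjoint_left]
  rintro m ⟨-, h1, -, h3, -, h5, -⟩ ⟨-, h1', -, h3', -, h5', -⟩
  simp only at h1 h1' h3 h3' h5 h5'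
  have hj : j = j' := by
    rcases lt_trichotomy j j' with h | h | h
    · have a1 := h1' j' (by omega) le_rfl
      have a2 := h3 (2 * j') (by omega)
      omega
    · exact h
    · have a1 := h1 j (by omega) le_rfl
      have a2 := h3' (2 * j) (by omega)
      omega
  subst hj
  exact hne (by rw [Prod.mk.injEq]; omega)

lemma parts_inj (n : ℕ) : Function.Injective (Nat.Partition.parts : n.Partition → Multiset ℕ) :=
  fun _ _ h => Nat.Partition.ext h

/-- `B_{3,1}(n) = T(n)`: the number of partitions of `n` into parts greater than `1`, with no
two consecutive integers both appearing and no part appearing more than twice, equals the number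
of partitions of `n` counted by `T(n)`: every odd part appears at most once, no odd part less
than (largest repeated part) + 2 appears, every positive even integer less than the largest
repeated part appears at least twice, and no two consecutive integers both appear as parts. -/
theorem B31_eq_T (n : ℕ) :
    Nat.card {π : n.Partition //
        (∀ j ∈ π.parts, 1 < j) ∧
        (∀ j, ¬(j ∈ π.parts ∧ j + 1 ∈ π.parts)) ∧
        (∀ j, π.parts.count j ≤ 2)} =
      Nat.card {π : n.Partition //
        (∀ j, Odd j → π.parts.count j ≤ 1) ∧
        (∀ j, Odd j → j < largestRepeatedPart π + 2 → π.parts.count j = 0) ∧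
        (∀ j, Even j → 0 < j → j < largestRepeatedPart π → 2 ≤ π.parts.count j) ∧
        (∀ j, ¬(j ∈ π.parts ∧ j + 1 ∈ π.parts))} := by
  have hB := Cardinal.mk_image_eq (s := {π : n.Partition |
        (∀ j ∈ π.parts, 1 < j) ∧
        (∀ j, ¬(j ∈ π.parts ∧ j + 1 ∈ π.parts)) ∧
        (∀ j, π.parts.count j ≤ 2)}) (parts_inj n)
  have hT := Cardinal.mk_image_eq (s := {π : n.Partition |
        (∀ j, Odd j → π.parts.count j ≤ 1) ∧
        (∀ j, Odd j → j < largestRepeatedPart π + 2 → π.parts.count j = 0) ∧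
        (∀ j, Even j → 0 < j → j < largestRepeatedPart π → 2 ≤ π.parts.count j) ∧
        (∀ j, ¬(j ∈ π.parts ∧ j + 1 ∈ π.parts))}) (parts_inj n)
  rw [B_parts, Cardinal.mk_iUnion_eq_sum_mk (B_disj n)] at hB
  rw [T_parts, Cardinal.mk_iUnion_eq_sum_mk (T_disj n)] at hT
  have h : (fun p : ℕ × ℕ => #(BSet p.1 p.2 n)) = fun p : ℕ × ℕ => #(TSet p.1 p.2 n) := by
    funext p
    exact BT_eq (n + 1) n (by push_cast; omega) _ _
  rw [h] at hB
  exact congrArg Cardinal.toNat (hB.symm.trans hT)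
end

section
/- For every complex number q with |q| < 1, the sum over all nonnegative integers j of q^(2j^2+2j) · (q; q^2)_j · (-q^(2j+2); q)_∞ / ((q^2; q^2)_j) equals the product over all positive integers j with j not congruent to 0, 1, or −1 modulo 6 of 1/(1 − q^j). -/
/-- The finite q-Pochhammer symbol `(a; q)_n = ∏_{h=0}^{n-1} (1 - a q^h)`. -/
noncomputable def qPoch (a q : ℂ) (n : ℕ) : ℂ := ∏ h ∈ Finset.range n, (1 - a * q ^ h)

/-- The infinite q-Pochhammer symbol `(a; q)_∞ = ∏_{h=0}^{∞} (1 - a q^h)`. -/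
noncomputable def qPochInf (a q : ℂ) : ℂ := ∏' h : ℕ, (1 - a * q ^ h)

open Filter Topology

/-- Gaussian binomials, by the Pascal recursion. -/
noncomputable def gb (Q : ℂ) : ℕ → ℕ → ℂ
  | 0, 0 => 1
  | 0, _ + 1 => 0
  | _ + 1, 0 => 1
  | n + 1, k + 1 => gb Q n (k + 1) + Q ^ (n - k) * gb Q n k

lemma gb_zero_right (Q : ℂ) (n : ℕ) : gb Q n 0 = 1 := by cases n <;> simp [gb]

lemma gb_gt (Q : ℂ) (n : ℕ) : ∀ k, n < k → gb Q n k = 0 := by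
  induction n with
  | zero => intro k hk; obtain ⟨k, rfl⟩ := Nat.exists_eq_succ_of_ne_zero hk.ne'; simp [gb]
  | succ n ih =>
    intro k hk
    obtain ⟨k, rfl⟩ := Nat.exists_eq_succ_of_ne_zero (by omega : k ≠ 0)
    simp [gb, ih (k+1) (by omega), ih k (by omega)]

lemma qPoch_succ (a q : ℂ) (n : ℕ) : qPoch a q (n+1) = qPoch a q n * (1 - a * q ^ n) := by
  simp [qPoch, Finset.prod_range_succ]

@[simp] lemma qPoch_zero (a q : ℂ) : qPoch a q 0 = 1 := by simp [qPoch]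

lemma qPoch_add (a q : ℂ) (m n : ℕ) :
    qPoch a q (m + n) = qPoch a q m * qPoch (a * q ^ m) q n := by
  simp only [qPoch, Finset.prod_range_add, pow_add, mul_assoc]

lemma gb_self (Q : ℂ) (n : ℕ) : gb Q n n = 1 := by
  induction n with
  | zero => simp [gb]
  | succ n ih => simp [gb, ih, gb_gt]

lemma gb_mul (Q : ℂ) (N : ℕ) : ∀ a b, a + b = N →
    gb Q N a * qPoch Q Q a * qPoch Q Q b = qPoch Q Q N := by
  induction N with
  | zero => intro a b h; obtain ⟨rfl, rfl⟩ : a = 0 ∧ b = 0 := by omega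
            simp [gb]
  | succ N ih =>
    intro a b h
    rcases a with _ | a
    · obtain rfl : b = N + 1 := by omega
      simp [gb]
    rcases b with _ | b
    · obtain rfl : a = N := by omega
      simp [gb_self]
    have h1 := ih (a+1) b (by omega)
    have h2 := ih a (b+1) (by omega)
    obtain rfl : N = a + b + 1 := by omega
    have e : a + b + 1 - a = b + 1 := by omega
    rw [gb, e, qPoch_succ Q Q (a+b+1), qPoch_succ Q Q a, qPoch_succ Q Q b]
    rw [qPoch_succ] at h1 h2
    linear_combination (1 - Q * Q ^ b) * h1 + Q ^ (b+1) * (1 - Q * Q ^ a) * h2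

lemma choose_two_succ (k : ℕ) : (k+1).choose 2 = k.choose 2 + k := by
  rw [Nat.choose_succ_succ' k 1]; simp [add_comm]

lemma qbinom (Q z : ℂ) (N : ℕ) :
    ∑ k ∈ Finset.range (N+1), (-1)^k * Q ^ (k.choose 2) * z ^ k * gb Q N k = qPoch z Q N := by
  induction N with
  | zero => simp [gb]
  | succ N ih =>
    rw [qPoch_succ, ← ih, Finset.sum_range_succ' _ (N+1)]
    have e : ∀ k ∈ Finset.range (N+1),
        (-1)^(k+1) * Q ^ ((k+1).choose 2) * z ^ (k+1) * gb Q (N+1) (k+1)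
        = (-1)^(k+1) * Q ^ ((k+1).choose 2) * z ^ (k+1) * gb Q N (k+1)
          - z * Q ^ N * ((-1)^k * Q ^ (k.choose 2) * z ^ k * gb Q N k) := by
      intro k hk
      have : Q ^ N = Q ^ k * Q ^ (N - k) := by
        rw [← pow_add]; congr 1; have := Finset.mem_range.1 hk; omega
      rw [gb, choose_two_succ, this]
      ring
    rw [Finset.sum_congr rfl e, Finset.sum_sub_distrib, ← Finset.mul_sum]
    have := Finset.sum_range_succ' (fun k => (-1)^k * Q ^ (k.choose 2) * z ^ k * gb Q N k) (N+1)
    rw [Finset.sum_range_succ, gb_gt Q N (N+1) (by omega)] at this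
    simp only [gb_zero_right] at this ⊢
    linear_combination -this

lemma one_sub_ne {a q : ℂ} (ha : ‖a‖ < 1) (hq : ‖q‖ < 1) (n : ℕ) : 1 - a * q ^ n ≠ 0 := by
  intro h
  have h1 : a * q ^ n = 1 := (sub_eq_zero.1 h).symm
  have h2 : ‖a‖ * ‖q‖ ^ n = 1 := by simpa using congrArg norm h1
  have h3 : ‖q‖ ^ n ≤ 1 := pow_le_one₀ (norm_nonneg _) hq.le
  nlinarith [norm_nonneg a]

lemma qPoch_ne {a q : ℂ} (ha : ‖a‖ < 1) (hq : ‖q‖ < 1) (n : ℕ) : qPoch a q n ≠ 0 :=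
  Finset.prod_ne_zero_iff.2 fun i _ => one_sub_ne ha hq i

lemma summable_aux (a : ℂ) {q : ℂ} (hq : ‖q‖ < 1) : Summable fun h : ℕ => ‖-(a * q ^ h)‖ := by
  simp only [norm_neg, norm_mul, norm_pow]
  exact (summable_geometric_of_lt_one (norm_nonneg _) hq).mul_left _

lemma qPoch_tendsto (a : ℂ) {q : ℂ} (hq : ‖q‖ < 1) :
    Tendsto (fun n => qPoch a q n) atTop (𝓝 (qPochInf a q)) := by
  have := (multipliable_one_add_of_summable (summable_aux a hq)).hasProd.tendsto_prod_nat
  simpa [qPoch, qPochInf, sub_eq_add_neg] using this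

lemma qPochInf_ne {a q : ℂ} (ha : ‖a‖ < 1) (hq : ‖q‖ < 1) : qPochInf a q ≠ 0 := by
  have := tprod_one_add_ne_zero_of_summable (f := fun h : ℕ => -(a * q ^ h))
    (fun i => by simpa [sub_eq_add_neg] using one_sub_ne ha hq i) (summable_aux a hq)
  simpa [qPochInf, sub_eq_add_neg] using this

lemma qPoch_inv_bdd {q : ℂ} (hq : ‖q‖ < 1) : ∃ C : ℝ, 0 < C ∧ ∀ n, ‖(qPoch q q n)⁻¹‖ ≤ C := by
  have h := (qPoch_tendsto q hq).inv₀ (qPochInf_ne hq hq)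
  obtain ⟨C, hC⟩ := (Metric.isBounded_range_of_tendsto _ h).exists_norm_le
  refine ⟨max C 1, by positivity, fun n => (hC _ ⟨n, rfl⟩).trans (le_max_left _ _)⟩

lemma qPochInf_shift (a : ℂ) {q : ℂ} (hq : ‖q‖ < 1) (m : ℕ) :
    qPochInf a q = qPoch a q m * qPochInf (a * q ^ m) q := by
  have h1 := (qPoch_tendsto a hq).comp (tendsto_add_atTop_nat m)
  have h2 := (qPoch_tendsto (a * q ^ m) hq).const_mul (qPoch a q m)
  refine tendsto_nhds_unique h1 (h2.congr fun n => ?_)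
  simp [add_comm n m, qPoch_add]

lemma qPoch_neg (q : ℂ) (n : ℕ) :
    qPoch (q^2) (q^2) n = qPoch q q n * qPoch (-q) q n := by
  simp only [qPoch, ← Finset.prod_mul_distrib]
  refine Finset.prod_congr rfl fun i _ => ?_
  ring

lemma qPochInf_neg {q : ℂ} (hq : ‖q‖ < 1) :
    qPochInf (q^2) (q^2) = qPochInf q q * qPochInf (-q) q := by
  have hq2 : ‖q^2‖ < 1 := by rw [norm_pow]; exact pow_lt_one₀ (norm_nonneg _) hq (by norm_num)
  refine tendsto_nhds_unique (qPoch_tendsto _ hq2) ?_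
  simpa only [qPoch_neg] using (qPoch_tendsto q hq).mul (qPoch_tendsto (-q) hq)

lemma qPoch_odd (q : ℂ) (n : ℕ) :
    qPoch q q (2*n+1) = qPoch q (q^2) (n+1) * qPoch (q^2) (q^2) n := by
  induction n with
  | zero => simp [qPoch]
  | succ n ih =>
    rw [show 2*(n+1)+1 = 2*n+1+1+1 by ring, qPoch_succ, qPoch_succ, ih, qPoch_succ _ _ (n+1),
      qPoch_succ (q^2) (q^2) n]
    ring

lemma choose_id1 (k r : ℕ) : k.choose 2 + (k+r+1).choose 2 = (r+1).choose 2 + (k+r)*k := by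
  have : ((k.choose 2 + (k+r+1).choose 2 : ℕ) : ℚ) = ((r+1).choose 2 + (k+r)*k : ℕ) := by
    push_cast [Nat.cast_choose_two]; ring
  exact_mod_cast this

lemma choose_id2 (n r : ℕ) :
    (n+1+r).choose 2 + (n+1).choose 2 = (r+1).choose 2 + n*(n+1+r) := by
  have : (((n+1+r).choose 2 + (n+1).choose 2 : ℕ) : ℚ) = ((r+1).choose 2 + n*(n+1+r) : ℕ) := by
    push_cast [Nat.cast_choose_two]; ring
  exact_mod_cast this

lemma qPoch_reflect {B w : ℂ} (hB : B ≠ 0) (hw : w ≠ 0) (n : ℕ) :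
    qPoch (w / B ^ n) B n * B ^ ((n+1).choose 2) = (-1)^n * w^n * qPoch (B/w) B n := by
  induction n with
  | zero => simp
  | succ n ih =>
    have : qPoch (w / B ^ (n+1)) B (n+1) = (1 - w / B^(n+1)) * qPoch (w / B ^ n) B n := by
      rw [add_comm n 1, qPoch_add]
      congr 1
      · simp [qPoch]
      · congr 1; field_simp; ring
    rw [this, choose_two_succ, qPoch_succ, pow_add]
    have e : (1 - w / B^(n+1)) * B^(n+1) = (-1) * w * (1 - B / w * B^n) := by
      field_simp; ring
    calc _ = ((1 - w / B^(n+1)) * B^(n+1)) * (qPoch (w / B ^ n) B n * B ^ ((n+1).choose 2)) := by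
          ring
      _ = _ := by rw [e, ih]; ring

lemma finite_jtp {B w : ℂ} (hB : B ≠ 0) (hw : w ≠ 0) (hB1 : ‖B‖ < 1) (n : ℕ) :
    ∑ r ∈ Finset.range (n+1), (-1)^r * B ^ ((r+1).choose 2) * ((w^r)⁻¹ - w^(r+1)) *
      (qPoch B B (n-r))⁻¹ * (qPoch B B (n+1+r))⁻¹ =
    qPoch w B (n+1) * qPoch (B/w) B n * (qPoch B B (2*n+1))⁻¹ := by
  have hne := fun n => qPoch_ne hB1 hB1 n
  have A := qbinom B (w / B^n) (2*n+1)
  rw [show 2*n+1+1 = (n+1)+(n+1) by ring, Finset.sum_range_add,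
    ← Finset.sum_range_reflect _ (n+1), ← Finset.sum_add_distrib,
    show 2*n+1 = n + (n+1) by ring, qPoch_add, div_mul_cancel₀ _ (pow_ne_zero _ hB)] at A
  have R := qPoch_reflect hB hw n
  have hc : (-1)^n * w^n ≠ 0 := mul_ne_zero (pow_ne_zero _ (by norm_num)) (pow_ne_zero _ hw)
  apply mul_left_cancel₀ hc
  rw [show 2*n+1 = n + (n+1) by ring]
  calc _ = B ^ ((n+1).choose 2) * (qPoch (w / B ^ n) B n * qPoch w B (n + 1)) *
        (qPoch B B (n + (n+1)))⁻¹ := ?_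
    _ = _ := by linear_combination (qPoch w B (n + 1) * (qPoch B B (n + (n+1)))⁻¹) * R
  rw [← A, Finset.mul_sum, Finset.mul_sum, Finset.sum_mul]
  refine Finset.sum_congr rfl fun r hr => ?_
  obtain ⟨k, rfl⟩ := Nat.exists_eq_add_of_le (Nat.lt_succ_iff.1 (Finset.mem_range.1 hr))
  have e1 : r + k + 1 - 1 - r = k := by omega
  have e2 : r + k - r = k := by omega
  rw [e1, e2]
  have g1 := gb_mul B (r + k + (r + k + 1)) k (r+k+1+r) (by omega)
  have g2 := gb_mul B (r + k + (r + k + 1)) (r+k+1+r) k (by omega)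
  have g1' : gb B (r + k + (r + k + 1)) k * (qPoch B B (r + k + (r+k+1)))⁻¹ =
      (qPoch B B k)⁻¹ * (qPoch B B (r+k+1+r))⁻¹ := by
    have := hne k; have := hne (r+k+1+r); have := hne (r + k + (r+k+1))
    field_simp; linear_combination g1
  have g2' : gb B (r + k + (r + k + 1)) (r+k+1+r) * (qPoch B B (r + k + (r+k+1)))⁻¹ =
      (qPoch B B k)⁻¹ * (qPoch B B (r+k+1+r))⁻¹ := by
    have := hne k; have := hne (r+k+1+r); have := hne (r + k + (r+k+1))
    field_simp; linear_combination g2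
  have p1 : B ^ (r+k+1).choose 2 * (B ^ k.choose 2 * (w / B^(r+k))^k) =
      B ^ (r+1).choose 2 * w ^ k := by
    have := choose_id1 k r
    rw [add_comm k r] at this
    rw [div_pow, ← pow_mul]
    field_simp
    rw [← pow_add, ← pow_add, add_comm, this]; ring
  have p2 : B ^ (r+k+1).choose 2 * (B ^ (r+k+1+r).choose 2 * (w / B^(r+k))^(r+k+1+r)) =
      B ^ (r+1).choose 2 * w ^ (r+k+1+r) := by
    have := choose_id2 (r+k) r
    rw [div_pow, ← pow_mul]
    field_simp
    rw [← pow_add, ← pow_add, add_comm, this]; ring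
  have s1 : (-1:ℂ)^(r+k) * (-1)^r = (-1)^k := by
    rw [pow_add, mul_right_comm, ← mul_pow]; norm_num
  have s2 : (-1:ℂ)^(r+k+1+r) = -(-1)^k := by
    rw [← s1]; ring
  have w1 : w^(r+k) * (w^r)⁻¹ = w^k := by field_simp; ring
  have w2 : w^(r+k) * w^(r+1) = w^(r+k+1+r) := by ring
  calc _ = ((-1:ℂ)^(r+k) * (-1)^r) * B ^ (r+1).choose 2 *
          (w^(r+k) * (w^r)⁻¹ - w^(r+k) * w^(r+1)) *
          ((qPoch B B k)⁻¹ * (qPoch B B (r+k+1+r))⁻¹) := by ring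
    _ = (-1)^k * (B ^ (r+1).choose 2 * w ^ k) *
          ((qPoch B B k)⁻¹ * (qPoch B B (r+k+1+r))⁻¹) - (-1)^k *
          (B ^ (r+1).choose 2 * w ^ (r+k+1+r)) *
          ((qPoch B B k)⁻¹ * (qPoch B B (r+k+1+r))⁻¹) := by
        rw [s1, w1, w2]; ring
    _ = _ := by
        nth_rewrite 1 [← g1']
        rw [← g2', ← p1, ← p2, s2]; ring

/-- Summand of the Durfee rectangle identity. -/
noncomputable def dur (Q : ℂ) (s m : ℕ) : ℂ :=
  Q ^ (m^2 + m*s) * (qPoch Q Q m)⁻¹ * (qPoch Q Q (m+s))⁻¹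

lemma dur_bound {Q : ℂ} (hQ : ‖Q‖ < 1) :
    ∃ C : ℝ, 0 < C ∧ ∀ s m, ‖dur Q s m‖ ≤ C * ‖Q‖ ^ m := by
  obtain ⟨C, hC, h⟩ := qPoch_inv_bdd hQ
  refine ⟨C * C, by positivity, fun s m => ?_⟩
  rw [dur, norm_mul, norm_mul, norm_pow]
  have h1 : ‖Q‖ ^ (m^2 + m*s) ≤ ‖Q‖ ^ m :=
    pow_le_pow_of_le_one (norm_nonneg _) hQ.le (by nlinarith [sq_nonneg m, Nat.le_self_pow (two_ne_zero) m])
  calc _ ≤ ‖Q‖ ^ m * C * C := by gcongr <;> apply h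
    _ = _ := by ring

lemma dur_summable {Q : ℂ} (hQ : ‖Q‖ < 1) (s : ℕ) : Summable (dur Q s) := by
  obtain ⟨C, _, h⟩ := dur_bound hQ
  exact Summable.of_norm_bounded
    ((summable_geometric_of_lt_one (norm_nonneg _) hQ).mul_left C) (h s)

lemma dur_rec {Q : ℂ} (hQ : ‖Q‖ < 1) (s : ℕ) :
    ∑' m, dur Q s m = ∑' m, dur Q (s+1) m + Q^(s+1) * ∑' m, dur Q (s+2) m
      - Q^(s+1) * ∑' m, dur Q (s+1) m := by
  have hne := fun n => qPoch_ne hQ hQ n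
  set e : ℕ → ℂ := fun m =>
    Q ^ (m^2 + m*s) * (1 - Q^m) * (qPoch Q Q m)⁻¹ * (qPoch Q Q (m+s+1))⁻¹ with he
  have e0 : e 0 = 0 := by simp [he]
  have es : ∀ m, e (m+1) = Q^(s+1) * dur Q (s+2) m := by
    intro m
    simp only [he, dur]
    rw [show m+1+s+1 = m+(s+2) by ring, qPoch_succ Q Q m]
    have h1 := hne m; have h2 := hne (m+(s+2)); have h3 := one_sub_ne hQ hQ m
    have h4 : 1 - Q^(m+1) = 1 - Q * Q^m := by ring
    rw [h4]
    field_simp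
    ring
  have hes : Summable e := by
    rw [← summable_nat_add_iff 1]
    simp only [es]
    exact (dur_summable hQ _).mul_left _
  have het : ∑' m, e m = Q^(s+1) * ∑' m, dur Q (s+2) m := by
    rw [hes.tsum_eq_zero_add, e0, zero_add]
    simp only [es, tsum_mul_left]
  have hd : ∀ m, dur Q s m = dur Q (s+1) m + e m - Q^(s+1) * dur Q (s+1) m := by
    intro m
    simp only [he, dur]
    rw [← add_assoc m s 1, qPoch_succ Q Q (m+s)]
    have h1 := hne m; have h2 := hne (m+s); have h3 := one_sub_ne hQ hQ (m+s)
    field_simp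
    ring
  rw [← het, ← tsum_mul_left, ← (dur_summable hQ (s+1)).tsum_add hes,
    ← ((dur_summable hQ (s+1)).add hes).tsum_sub ((dur_summable hQ (s+1)).mul_left _)]
  exact tsum_congr hd

lemma dur_tendsto {Q : ℂ} (hQ : ‖Q‖ < 1) :
    Tendsto (fun s => ∑' m, dur Q s m) atTop (𝓝 (qPochInf Q Q)⁻¹) := by
  obtain ⟨C, hC, h⟩ := dur_bound hQ
  have := tendsto_tsum_of_dominated_convergence (𝓕 := atTop) (f := fun s m => dur Q s m)
    (g := fun m => if m = 0 then (qPochInf Q Q)⁻¹ else 0)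
    ((summable_geometric_of_lt_one (norm_nonneg _) hQ).mul_left C) ?_
    (Eventually.of_forall fun s m => h s m)
  · simpa using this
  · intro m
    have hp : Tendsto (fun s => (qPoch Q Q (m+s))⁻¹) atTop (𝓝 (qPochInf Q Q)⁻¹) := by
      have := ((qPoch_tendsto Q hQ).inv₀ (qPochInf_ne hQ hQ)).comp (tendsto_add_atTop_nat m)
      simpa [Function.comp_def, add_comm] using this
    by_cases hm : m = 0
    · subst hm; simpa [dur] using hp
    · have h0 : Tendsto (fun s => Q ^ (m^2 + m*s)) atTop (𝓝 0) := by
        refine (tendsto_pow_atTop_nhds_zero_of_norm_lt_one hQ).comp ?_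
        refine tendsto_atTop_mono (fun s => ?_) tendsto_id
        have : 1 ≤ m := Nat.one_le_iff_ne_zero.2 hm
        simp only [id]; nlinarith [sq_nonneg m]
      simpa [dur, hm] using (h0.mul_const ((qPoch Q Q m)⁻¹)).mul hp

lemma durfee {Q : ℂ} (hQ : ‖Q‖ < 1) (s : ℕ) : ∑' m, dur Q s m = (qPochInf Q Q)⁻¹ := by
  set F : ℕ → ℂ := fun s => ∑' m, dur Q s m with hF
  have hT : Tendsto F atTop (𝓝 (qPochInf Q Q)⁻¹) := dur_tendsto hQ
  have hD : ∀ s, F s - F (s+1) = -Q^(s+1) * (F (s+1) - F (s+2)) := by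
    intro s
    have : F s = F (s+1) + Q^(s+1) * F (s+2) - Q^(s+1) * F (s+1) := dur_rec hQ s
    rw [this]; ring
  have hmono : Monotone fun s => ‖F s - F (s+1)‖ := by
    refine monotone_nat_of_le_succ fun s => ?_
    rw [hD, norm_mul, norm_neg, norm_pow]
    exact mul_le_of_le_one_left (norm_nonneg _) (pow_le_one₀ (norm_nonneg _) hQ.le)
  have h0 : Tendsto (fun s => ‖F s - F (s+1)‖) atTop (𝓝 0) := by
    have := (hT.sub (hT.comp (tendsto_add_atTop_nat 1))).norm
    simpa using this
  have heq : ∀ s, F s = F (s+1) := fun s => by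
    have := hmono.ge_of_tendsto h0 s
    exact sub_eq_zero.1 (norm_le_zero_iff.1 this)
  have hc : ∀ s, F s = F 0 := by
    intro s; induction s with
    | zero => rfl
    | succ n ih => rw [← heq, ih]
  rw [show ∑' m, dur Q s m = F s from rfl, hc]
  refine tendsto_nhds_unique ?_ hT
  rw [show F = fun _ => F 0 from funext hc]
  exact tendsto_const_nhds

lemma bailey {Q : ℂ} (hQ : ‖Q‖ < 1) (a : ℕ → ℂ) (A : ℝ) (ha : ∀ r, ‖a r‖ ≤ A) :
    ∑' n, Q^(n^2+n) * ∑ r ∈ Finset.range (n+1), a r * (qPoch Q Q (n-r))⁻¹ *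
      (qPoch Q Q (n+1+r))⁻¹ = (∑' r, Q^(r^2+r) * a r) * (qPochInf Q Q)⁻¹ := by
  have hA : 0 ≤ A := (norm_nonneg _).trans (ha 0)
  set f : ℕ × ℕ → ℂ := fun p => Q^(p.1^2+p.1) * a p.1 * dur Q (2*p.1+1) p.2 with hf
  have hg := summable_geometric_of_lt_one (norm_nonneg _) hQ
  have hs : Summable f := by
    obtain ⟨C, hC, h⟩ := dur_bound hQ
    refine Summable.of_norm_bounded (g := fun p : ℕ × ℕ => (A * C) * (‖Q‖^p.1 * ‖Q‖^p.2))
      ((hg.mul_of_nonneg hg (fun _ => by positivity) (fun _ => by positivity)).mul_left _) ?_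
    rintro ⟨r, m⟩
    simp only [hf, norm_mul, norm_pow]
    have h1 : ‖Q‖ ^ (r^2 + r) ≤ ‖Q‖ ^ r :=
      pow_le_pow_of_le_one (norm_nonneg _) hQ.le (by nlinarith [sq_nonneg r])
    calc _ ≤ ‖Q‖^r * A * (C * ‖Q‖^m) := by
          gcongr
          · exact ha r
          · exact h _ _
      _ = _ := by ring
  have h1 : ∑' p, f p = (∑' r, Q^(r^2+r) * a r) * (qPochInf Q Q)⁻¹ := by
    rw [hs.tsum_prod]
    simp only [hf, tsum_mul_left, durfee hQ, tsum_mul_right]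
  rw [← h1, ← Finset.HasAntidiagonal.sigmaAntidiagonalEquivProd.tsum_eq f]
  have hs' : Summable fun c : (Σ n : ℕ, Finset.HasAntidiagonal.antidiagonal n) =>
      f (Finset.HasAntidiagonal.sigmaAntidiagonalEquivProd c) :=
    (Equiv.summable_iff Finset.HasAntidiagonal.sigmaAntidiagonalEquivProd).2 hs
  rw [Summable.tsum_sigma' (fun n => (hasSum_fintype _).summable) hs']
  refine tsum_congr fun n => ?_
  rw [tsum_fintype]
  have : ∑ b : Finset.HasAntidiagonal.antidiagonal n,
      f (Finset.HasAntidiagonal.sigmaAntidiagonalEquivProd ⟨n, b⟩)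
      = ∑ b ∈ Finset.HasAntidiagonal.antidiagonal n, f b := by
    exact Finset.sum_coe_sort (Finset.HasAntidiagonal.antidiagonal n) f
  rw [this, Finset.Nat.sum_antidiagonal_eq_sum_range_succ_mk, Finset.mul_sum]
  refine Finset.sum_congr rfl fun r hr => ?_
  obtain ⟨k, rfl⟩ := Nat.exists_eq_add_of_le (Nat.lt_succ_iff.1 (Finset.mem_range.1 hr))
  simp only [hf, dur, Nat.add_sub_cancel_left]
  rw [show r + k + 1 + r = k + (2*r+1) by ring]
  ring

lemma jtp {B w : ℂ} (hB : B ≠ 0) (hw : w ≠ 0) (hB1 : ‖B‖ < 1) (c : ℕ → ℂ)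
    (hc : ∀ r, c r = (-1)^r * B ^ ((r+1).choose 2) * ((w^r)⁻¹ - w^(r+1)))
    (hs : Summable fun r => ‖c r‖) :
    ∑' r, c r = qPochInf w B * qPochInf (B/w) B * qPochInf B B := by
  obtain ⟨C, hC, hb⟩ := qPoch_inv_bdd hB1
  have hPi := (qPoch_tendsto B hB1).inv₀ (qPochInf_ne hB1 hB1)
  have hL := tendsto_tsum_of_dominated_convergence (𝓕 := atTop)
    (f := fun n r => if r ∈ Finset.range (n+1) then
      c r * (qPoch B B (n-r))⁻¹ * (qPoch B B (n+1+r))⁻¹ else 0)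
    (g := fun r => c r * (qPochInf B B)⁻¹ * (qPochInf B B)⁻¹)
    (bound := fun r => ‖c r‖ * C * C)
    ((hs.mul_right C).mul_right C) ?_ ?_
  · have hR : Tendsto (fun n => qPoch w B (n+1) * qPoch (B/w) B n * (qPoch B B (2*n+1))⁻¹) atTop
        (𝓝 (qPochInf w B * qPochInf (B/w) B * (qPochInf B B)⁻¹)) := by
      refine Tendsto.mul (Tendsto.mul ?_ (qPoch_tendsto _ hB1)) ?_
      · exact (qPoch_tendsto w hB1).comp (tendsto_add_atTop_nat 1)
      · refine hPi.comp (tendsto_atTop_mono (fun n => ?_) tendsto_id)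
        simp only [id]; omega
    have := tendsto_nhds_unique hL (hR.congr fun n => ?_)
    · rw [tsum_mul_right, tsum_mul_right] at this
      have hne := qPochInf_ne hB1 hB1
      field_simp at this
      rw [this]; ring
    · rw [← finite_jtp hB hw hB1 n, tsum_eq_sum (s := Finset.range (n+1))]
      · refine Finset.sum_congr rfl fun r hr => ?_
        rw [if_pos hr, hc]
      · intro r hr; rw [if_neg hr]
  · intro r
    have h1 : Tendsto (fun n => c r * (qPoch B B (n-r))⁻¹ * (qPoch B B (n+1+r))⁻¹) atTop
        (𝓝 (c r * (qPochInf B B)⁻¹ * (qPochInf B B)⁻¹)) := by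
      refine (Tendsto.const_mul _ (hPi.comp (tendsto_sub_atTop_nat r))).mul
        (hPi.comp (tendsto_atTop_mono (fun n => ?_) tendsto_id))
      simp only [id]; omega
    refine h1.congr' ?_
    filter_upwards [eventually_ge_atTop r] with n hn
    rw [if_pos (Finset.mem_range.2 (by omega))]
  · refine Eventually.of_forall fun n r => ?_
    split_ifs
    · rw [norm_mul, norm_mul]
      gcongr <;> apply hb
    · simp only [norm_zero]; positivity

lemma two_choose (r : ℕ) : 2 * (r+1).choose 2 = r^2 + r := by
  have : ((2 * (r+1).choose 2 : ℕ) : ℚ) = (r^2 + r : ℕ) := by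
    push_cast [Nat.cast_choose_two]; ring
  exact_mod_cast this

lemma prod_side {q : ℂ} (hq : ‖q‖ < 1) :
    ∏' j : {j : ℕ // 0 < j ∧ j % 6 ≠ 0 ∧ j % 6 ≠ 1 ∧ j % 6 ≠ 5}, (1 - q ^ (j : ℕ))⁻¹ =
      qPochInf q (q^6) * qPochInf (q^5) (q^6) * qPochInf (q^6) (q^6) * (qPochInf q q)⁻¹ := by
  have hq6 : ‖q^6‖ < 1 := by rw [norm_pow]; exact pow_lt_one₀ (norm_nonneg _) hq (by norm_num)
  have hn : ∀ j, 0 < j → 1 - q^j ≠ 0 := by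
    intro j hj
    obtain ⟨j, rfl⟩ := Nat.exists_eq_succ_of_ne_zero hj.ne'
    rw [Nat.succ_eq_add_one, pow_succ']; exact one_sub_ne hq hq j
  set S : Set ℕ := {j : ℕ | 0 < j ∧ j % 6 ≠ 0 ∧ j % 6 ≠ 1 ∧ j % 6 ≠ 5} with hS
  set g : ℕ → ℂ := S.mulIndicator fun j => (1 - q^j)⁻¹ with hg
  have h1 : ∏' j : {j : ℕ // 0 < j ∧ j % 6 ≠ 0 ∧ j % 6 ≠ 1 ∧ j % 6 ≠ 5}, (1 - q ^ (j : ℕ))⁻¹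
      = ∏' j, g j := tprod_subtype S fun j => (1 - q^j)⁻¹
  rw [h1]
  have hm : Multipliable g := by
    have hb : Summable fun j => ‖g j - 1‖ := by
      refine Summable.of_nonneg_of_le (fun _ => norm_nonneg _) (f := fun j => (1 - ‖q‖)⁻¹ * ‖q‖^j) ?_
        ((summable_geometric_of_lt_one (norm_nonneg _) hq).mul_left _)
      intro j
      have hpos : 0 < 1 - ‖q‖ := by linarith
      by_cases hj : j ∈ S
      · have hj0 : 0 < j := hj.1
        have e : g j - 1 = (1 - q^j)⁻¹ * q^j := by
          rw [hg, Set.mulIndicator_of_mem hj]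
          have := hn j hj0
          field_simp; ring
        rw [e, norm_mul, norm_inv, norm_pow]
        gcongr
        have h2 : ‖q‖^j ≤ ‖q‖ := pow_le_of_le_one (norm_nonneg _) hq.le hj0.ne'
        have h3 := norm_sub_norm_le (1:ℂ) (q^j)
        rw [norm_one, norm_pow] at h3
        linarith
      · rw [hg, Set.mulIndicator_of_notMem hj]; simp only [sub_self, norm_zero]; positivity
    simpa using multipliable_one_add_of_summable hb
  have hT := hm.hasProd.tendsto_prod_nat
  have hsub : Tendsto (fun n => 6*n+1) atTop (atTop : Filter ℕ) :=
    tendsto_atTop_mono (fun n => by simp only [id]; omega) tendsto_id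
  have hsub' : Tendsto (fun n => 6*n) atTop (atTop : Filter ℕ) :=
    tendsto_atTop_mono (fun n => by simp only [id]; omega) tendsto_id
  refine tendsto_nhds_unique (hT.comp hsub) ?_
  have hR := (((qPoch_tendsto q hq6).mul (qPoch_tendsto (q^5) hq6)).mul
    (qPoch_tendsto (q^6) hq6)).mul (((qPoch_tendsto q hq).inv₀ (qPochInf_ne hq hq)).comp hsub')
  refine hR.congr fun n => ?_
  simp only [Function.comp]
  induction n with
  | zero => simp [hg, hS]
  | succ n ih =>
    rw [show 6*(n+1)+1 = 6*n+1+1+1+1+1+1+1 by ring, show 6*(n+1) = 6*n+1+1+1+1+1+1 by ring]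
    simp only [Finset.prod_range_succ _ (6*n+1), Finset.prod_range_succ _ (6*n+1+1),
      Finset.prod_range_succ _ (6*n+1+1+1), Finset.prod_range_succ _ (6*n+1+1+1+1),
      Finset.prod_range_succ _ (6*n+1+1+1+1+1), Finset.prod_range_succ _ (6*n+1+1+1+1+1+1)]
    rw [← ih]
    have g1 : g (6*n+1) = 1 := Set.mulIndicator_of_notMem (by simp only [hS, Set.mem_ofPred_eq]; omega) _
    have g2 : g (6*n+1+1) = (1 - q^(6*n+1+1))⁻¹ :=
      Set.mulIndicator_of_mem (by simp only [hS, Set.mem_ofPred_eq]; omega) _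
    have g3 : g (6*n+1+1+1) = (1 - q^(6*n+1+1+1))⁻¹ :=
      Set.mulIndicator_of_mem (by simp only [hS, Set.mem_ofPred_eq]; omega) _
    have g4 : g (6*n+1+1+1+1) = (1 - q^(6*n+1+1+1+1))⁻¹ :=
      Set.mulIndicator_of_mem (by simp only [hS, Set.mem_ofPred_eq]; omega) _
    have g5 : g (6*n+1+1+1+1+1) = 1 :=
      Set.mulIndicator_of_notMem (by simp only [hS, Set.mem_ofPred_eq]; omega) _
    have g6 : g (6*n+1+1+1+1+1+1) = 1 :=
      Set.mulIndicator_of_notMem (by simp only [hS, Set.mem_ofPred_eq]; omega) _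
    rw [g1, g2, g3, g4, g5, g6]
    simp only [qPoch_succ, ← pow_succ', ← pow_mul, ← pow_add, mul_inv]
    rw [show 5 + 6*n = 6*n+1+1+1+1+1 by ring, show 6 + 6*n = 6*n+1+1+1+1+1+1 by ring]
    have k1 := hn (6*n+1) (by omega)
    have k5 := hn (6*n+1+1+1+1+1) (by omega)
    have k6 := hn (6*n+1+1+1+1+1+1) (by omega)
    generalize (1 - q^(6*n+1+1))⁻¹ = x2
    generalize (1 - q^(6*n+1+1+1))⁻¹ = x3
    generalize (1 - q^(6*n+1+1+1+1))⁻¹ = x4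
    field_simp

/-- Slater's mod 6 analog of the first Rogers–Selberg identity. -/
theorem slater_mod6 (q : ℂ) (hq : ‖q‖ < 1) :
    ∑' j : ℕ, q ^ (2 * j ^ 2 + 2 * j) * qPoch q (q ^ 2) j * qPochInf (-(q ^ (2 * j + 2))) q /
        qPoch (q ^ 2) (q ^ 2) j =
      ∏' j : {j : ℕ // 0 < j ∧ j % 6 ≠ 0 ∧ j % 6 ≠ 1 ∧ j % 6 ≠ 5},
        (1 - q ^ (j : ℕ))⁻¹ := by
  by_cases hq0 : q = 0
  · subst hq0
    have h1 : ∀ j : {j : ℕ // 0 < j ∧ j % 6 ≠ 0 ∧ j % 6 ≠ 1 ∧ j % 6 ≠ 5},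
        (1 - (0:ℂ) ^ (j : ℕ))⁻¹ = 1 := fun j => by
      rw [zero_pow j.2.1.ne']; simp
    rw [tprod_congr h1, tprod_one, tsum_eq_single 0]
    · simp [qPochInf]
    · intro j hj
      rw [zero_pow (by positivity)]; simp
  have hq2 : ‖q^2‖ < 1 := by rw [norm_pow]; exact pow_lt_one₀ (norm_nonneg _) hq (by norm_num)
  have hq6 : ‖q^6‖ < 1 := by rw [norm_pow]; exact pow_lt_one₀ (norm_nonneg _) hq (by norm_num)
  have hmq : ‖-q‖ < 1 := by rwa [norm_neg]
  rw [prod_side hq]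
  set a : ℕ → ℂ := fun r => (-1)^r * q^(r^2) * (1 - q^(2*r+1)) with ha
  have hnorm : ∀ r, ‖1 - q^(2*r+1)‖ ≤ 2 := fun r => by
    refine (norm_sub_le _ _).trans ?_
    rw [norm_one, norm_pow]
    linarith [pow_le_one₀ (n := 2*r+1) (norm_nonneg q) hq.le]
  have hab : ∀ r, ‖a r‖ ≤ 2 := fun r => by
    simp only [ha, norm_mul, norm_pow, norm_neg, norm_one, one_pow, one_mul]
    have := pow_le_one₀ (n := r^2) (norm_nonneg q) hq.le
    nlinarith [hnorm r, norm_nonneg (1 - q^(2*r+1)), pow_nonneg (norm_nonneg q) (r^2)]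
  -- the theta series
  have hθ : ∑' r, (q^2)^(r^2+r) * a r =
      qPochInf q (q^6) * qPochInf (q^5) (q^6) * qPochInf (q^6) (q^6) := by
    have h5 : q^6 / q = q^5 := by field_simp
    rw [← h5]
    refine jtp (pow_ne_zero _ hq0) hq0 hq6 _ (fun r => ?_) ?_
    · rw [← pow_mul q 6, show 6 * (r+1).choose 2 = 3 * (2 * (r+1).choose 2) by ring, two_choose]
      simp only [ha]
      field_simp
      ring
    · refine Summable.of_nonneg_of_le (fun _ => norm_nonneg _) (fun r => ?_)
        ((summable_geometric_of_lt_one (norm_nonneg _) hq2).mul_right 2)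
      rw [norm_mul, norm_pow (q^2)]
      have h1 : ‖q^2‖ ^ (r^2 + r) ≤ ‖q^2‖ ^ r :=
        pow_le_pow_of_le_one (norm_nonneg _) hq2.le (by nlinarith [sq_nonneg r])
      exact mul_le_mul h1 (hab r) (norm_nonneg _) (by positivity)
  have hterm : ∀ j : ℕ, q ^ (2 * j ^ 2 + 2 * j) * qPoch q (q ^ 2) j *
      qPochInf (-(q ^ (2 * j + 2))) q / qPoch (q ^ 2) (q ^ 2) j =
      qPochInf (-q) q * ((q^2)^(j^2+j) * ∑ r ∈ Finset.range (j+1), a r *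
        (qPoch (q^2) (q^2) (j-r))⁻¹ * (qPoch (q^2) (q^2) (j+1+r))⁻¹) := by
    intro j
    have hf := finite_jtp (pow_ne_zero 2 hq0) hq0 hq2 j
    have hsum : ∑ r ∈ Finset.range (j+1), a r *
        (qPoch (q^2) (q^2) (j-r))⁻¹ * (qPoch (q^2) (q^2) (j+1+r))⁻¹ =
        qPoch q (q^2) (j+1) * qPoch q (q^2) j * (qPoch (q^2) (q^2) (2*j+1))⁻¹ := by
      have h1 : q^2 / q = q := by field_simp
      rw [h1] at hf
      rw [← hf]
      refine Finset.sum_congr rfl fun r _ => ?_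
      congr 2
      rw [← pow_mul q 2, two_choose]
      simp only [ha]
      field_simp
      ring
    rw [hsum, qPoch_neg q (2*j+1), qPoch_odd, qPochInf_shift (-q) hq (2*j+1)]
    have e : -q * q^(2*j+1) = -(q^(2*j+2)) := by ring
    rw [e]
    have n1 := qPoch_ne hq hq2 (j+1)
    have n2 := qPoch_ne hq2 hq2 j
    have n3 := qPoch_ne hmq hq (2*j+1)
    field_simp
    ring
  rw [tsum_congr hterm, tsum_mul_left, bailey hq2 a 2 hab, hθ, qPochInf_neg hq]
  have n1 := qPochInf_ne hq hq
  have n2 := qPochInf_ne hmq hq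
  field_simp
end
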